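/- arXiv:2103.10627 — 2 statements merged into one kernel-verified Lean document; each statement's English description precedes it below -/
import Mathlib

section
/- Let C be a smooth closed convex curve in the plane ℝ² with length L, enclosed area A, and curvature κ > 0 (with arclength element ds). Then (2/π)(L² − 4πA) ≤ ∫_C (1/κ) ds − 2A. -/
open MeasureTheory Real
open scoped RealInnerProductSpace Pointwise

noncomputable section


lemma coef_norm_sq (f f' : ℝ → ℝ) (hd : ∀ x, HasDerivAt f (f' x) x) (hc : Continuous f')
    (hp : f (2 * π) = f 0) (n : ℤ) :
    ‖fourierCoeffOn Real.two_pi_pos (fun x => (f' x : ℂ)) n‖ ^ 2 =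
      (n : ℝ) ^ 2 * ‖fourierCoeffOn Real.two_pi_pos (fun x => (f x : ℂ)) n‖ ^ 2 := by
  have hd' : ∀ x, HasDerivAt (fun x => (f x : ℂ)) (f' x : ℂ) x := fun x => (hd x).ofReal_comp
  have hint : IntervalIntegrable (fun x => (f' x : ℂ)) volume 0 (2 * π) :=
    (Complex.continuous_ofReal.comp hc).intervalIntegrable _ _
  by_cases hn : n = 0
  · subst hn
    rw [fourierCoeffOn_eq_integral]
    have := intervalIntegral.integral_eq_sub_of_hasDerivAt (fun x _ => hd' x) hint
    simp [this, hp]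
  · have h := fourierCoeffOn_of_hasDerivAt Real.two_pi_pos hn (fun x _ => hd' x) hint
    have hn' : (n : ℂ) ≠ 0 := by exact_mod_cast hn
    have hpi : (π : ℂ) ≠ 0 := by exact_mod_cast Real.pi_ne_zero
    have : fourierCoeffOn Real.two_pi_pos (fun x => (f' x : ℂ)) n =
      Complex.I * n * fourierCoeffOn Real.two_pi_pos (fun x => (f x : ℂ)) n := by
      rw [h, hp]
      push_cast
      field_simp
      ring_nf
    rw [this, norm_mul, norm_mul, mul_pow, mul_pow]
    simp

lemma parseval (f : ℝ → ℝ) (hc : Continuous f) :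
    HasSum (fun n : ℤ => ‖fourierCoeffOn Real.two_pi_pos (fun x => (f x : ℂ)) n‖ ^ 2)
      ((2 * π)⁻¹ * ∫ x in (0:ℝ)..2 * π, f x ^ 2) := by
  have hc' : Continuous (fun x => (f x : ℂ)) := Complex.continuous_ofReal.comp hc
  have := hasSum_sq_fourierCoeffOn (f := fun x => (f x : ℂ)) Real.two_pi_pos (by
    obtain ⟨C, hC⟩ := (isCompact_Icc (a := (0:ℝ)) (b := 2 * π)).exists_bound_of_continuousOn hc'.continuousOn
    refine MemLp.of_bound hc'.aestronglyMeasurable C ?_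
    filter_upwards [ae_restrict_mem measurableSet_Ioc] with x hx
    exact hC x ⟨hx.1.le, hx.2⟩)
  simpa using this

lemma fourier_ineq (h p q : ℝ → ℝ) (hh : ∀ x, HasDerivAt h (p x) x)
    (hp : ∀ x, HasDerivAt p (q x) x) (hq : Continuous q) (h0 : h (2 * π) = h 0)
    (p0 : p (2 * π) = p 0) :
    (2 / π) * (∫ x in (0:ℝ)..2 * π, h x) ^ 2 ≤ (∫ x in (0:ℝ)..2 * π, q x ^ 2)
      - 5 * (∫ x in (0:ℝ)..2 * π, p x ^ 2) + 4 * (∫ x in (0:ℝ)..2 * π, h x ^ 2) := by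
  have ch : Continuous h := continuous_iff_continuousAt.2 fun x => (hh x).continuousAt
  have cp : Continuous p := continuous_iff_continuousAt.2 fun x => (hp x).continuousAt
  have S := (((parseval q hq).sub ((parseval p cp).mul_left 5)).add ((parseval h ch).mul_left 4))
  have c0 : ‖fourierCoeffOn Real.two_pi_pos (fun x => (h x : ℂ)) 0‖ ^ 2 =
      ((2 * π)⁻¹ * ∫ x in (0:ℝ)..2 * π, h x) ^ 2 := by
    rw [fourierCoeffOn_eq_integral]
    simp [mul_pow]
    rw [intervalIntegral.integral_ofReal, Complex.norm_real, Real.norm_eq_abs, sq_abs]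
  have key := le_hasSum S 0 (by
    intro n _
    rw [coef_norm_sq p q hp hq p0, coef_norm_sq h p hh cp h0]
    have h2 : (0:ℝ) ≤ ((n:ℝ)^2 - 1) * ((n:ℝ)^2 - 4) := by
      have : (0:ℤ) ≤ (n^2 - 1) * (n^2 - 4) := by
        by_cases h1 : |n| ≤ 1
        · have := (sq_le_one_iff_abs_le_one n).2 h1
          nlinarith
        · have : 2 ≤ |n| := by omega
          have := (sq_le_sq₀ (by norm_num) (abs_nonneg n)).2 this
          rw [sq_abs] at this
          nlinarith
      exact_mod_cast this
    have := mul_nonneg h2 (sq_nonneg ‖fourierCoeffOn Real.two_pi_pos (fun x => (h x : ℂ)) n‖)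
    linarith)
  simp only [coef_norm_sq p q hp hq p0, coef_norm_sq h p hh cp h0, c0] at key
  have hpi := Real.pi_pos
  have k2 := mul_le_mul_of_nonneg_left key Real.two_pi_pos.le
  field_simp at k2 ⊢
  norm_num at k2
  linarith


lemma exists_angle (S : Set (ℝ × ℝ)) (hS : Convex ℝ S) (ho : IsOpen S) (hne : S.Nonempty)
    (F : ℝ × ℝ → ℂ) (hF : Continuous F) (h0 : ∀ p ∈ S, F p ≠ 0) :
    ∃ φ : ℝ × ℝ → ℝ, ContinuousOn φ S ∧
      ∀ p ∈ S, F p = (‖F p‖ : ℂ) * Complex.exp (φ p * Complex.I) := by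
  classical
  have : ContractibleSpace S := hS.contractibleSpace hne
  have : LocallyPathConnectedSpace S := ho.locallyPathConnectedSpace
  obtain ⟨a, ha⟩ := hne
  let f : C(S, ℂ) := ⟨fun p => F p, hF.comp continuous_subtype_val⟩
  obtain ⟨l, ⟨-, hl⟩, -⟩ := Complex.isCoveringMapOn_exp.existsUnique_continuousMap_lifts f
    (a₀ := ⟨a, ha⟩) (e₀ := Complex.log (F a)) (Complex.exp_log (h0 a ha)) (fun p => h0 p p.2)
  refine ⟨fun p => if h : p ∈ S then (l ⟨p, h⟩).im else 0, ?_, ?_⟩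
  · rw [continuousOn_iff_continuous_domRestrict]
    have : S.domRestrict (fun p => if h : p ∈ S then (l ⟨p, h⟩).im else 0) = fun p => (l p).im := by
      ext p
      simp [Set.domRestrict]
    rw [this]
    exact Complex.continuous_im.comp l.continuous
  · intro p hp
    have h1 : Complex.exp (l ⟨p, hp⟩) = F p := congrFun hl ⟨p, hp⟩
    simp only [hp, dif_pos]
    rw [← h1, Complex.norm_exp, Complex.ofReal_exp, ← Complex.exp_add, Complex.re_add_im]

lemma const_of_exp {X : Type*} [TopologicalSpace X] (S : Set X) (hS : IsPreconnected S) (D : X → ℝ)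
    (hD : ContinuousOn D S) (c : ℂ) (hc : ∀ p ∈ S, Complex.exp (D p * Complex.I) = c) :
    ∀ p ∈ S, ∀ q ∈ S, D p = D q := by
  have key : ∀ p ∈ S, ∀ q ∈ S, ¬ D p < D q := by
    intro p hp q hq hlt
    have hr : D p + min (D q - D p) π ∈ D '' S := by
      apply (hS.image D hD).ordConnected.out ⟨p, hp, rfl⟩ ⟨q, hq, rfl⟩
      constructor
      · have : 0 ≤ min (D q - D p) π := le_min (by linarith) Real.pi_pos.le
        linarith
      · have := min_le_left (D q - D p) π
        linarith
    obtain ⟨r, hrS, hr⟩ := hr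
    have h1 := (hc r hrS).trans (hc p hp).symm
    obtain ⟨n, hn⟩ := Complex.exp_eq_exp_iff_exists_int.1 h1
    have h2 : D r = D p + n * (2 * π) := by
      have := congrArg Complex.im hn
      simpa using this
    have h3 : 0 < min (D q - D p) π := lt_min (by linarith) Real.pi_pos
    have h4 := min_le_right (D q - D p) π
    have h5 : (n : ℝ) * (2 * π) = min (D q - D p) π := by linarith
    have h6 : (0:ℝ) < n := by
      by_contra h
      nlinarith [Real.pi_pos]
    have h7 : (1:ℝ) ≤ n := by
      have : 0 < n := by exact_mod_cast h6
      exact_mod_cast this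
    nlinarith [Real.pi_pos]
  intro p hp q hq
  exact le_antisymm (not_lt.1 (key q hq p hp)) (not_lt.1 (key p hp q hq))

lemma half_plane (S : Set ℝ) (hS : IsPreconnected S) (f : ℝ → ℝ) (hf : ContinuousOn f S)
    (hs : ∀ x ∈ S, 0 ≤ Real.sin (f x)) : ∀ x ∈ S, ∀ y ∈ S, f y - f x ≤ π := by
  intro x hx y hy
  by_contra! h
  have key : ∀ v, f x ≤ v → v ≤ f y → 0 ≤ Real.sin v := by
    intro v h1 h2
    obtain ⟨r, hr, rfl⟩ := (hS.image f hf).ordConnected.out ⟨x, hx, rfl⟩ ⟨y, hy, rfl⟩ ⟨h1, h2⟩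
    exact hs r hr
  have key2 : ∀ v, f x ≤ v → v + π ≤ f y → Real.sin v = 0 := by
    intro v h1 h2
    have a := key v h1 (by linarith [Real.pi_pos])
    have b := key (v + π) (by linarith [Real.pi_pos]) h2
    rw [Real.sin_add_pi] at b
    linarith
  set e := min (f y - f x - π) 1 with he
  have e0 : 0 < e := lt_min (by linarith) one_pos
  have e1 : e ≤ 1 := min_le_right _ _
  have e2 : e ≤ f y - f x - π := min_le_left _ _
  have s1 := key2 (f x) le_rfl (by linarith)
  have s2 := key2 (f x + e) (by linarith) (by linarith)
  have s3 : Real.sin e = 0 := by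
    have : e = (f x + e) - f x := by ring
    rw [this, Real.sin_sub, s1, s2]; ring
  exact (Real.sin_pos_of_pos_of_lt_pi e0 (by linarith [Real.pi_gt_three])).ne' s3

lemma half_plane_neg (S : Set ℝ) (hS : IsPreconnected S) (f : ℝ → ℝ) (hf : ContinuousOn f S)
    (hs : ∀ x ∈ S, Real.sin (f x) ≤ 0) : ∀ x ∈ S, ∀ y ∈ S, f y - f x ≤ π := by
  intro x hx y hy
  have := half_plane S hS (fun x => - f x) hf.neg
    (fun x hx => by rw [Real.sin_neg]; linarith [hs x hx]) y hy x hx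
  linarith

lemma polar_neg (a b x y : ℝ) (ha : 0 < a) (hb : 0 < b)
    (h : (a : ℂ) * Complex.exp (x * Complex.I) = -((b : ℂ) * Complex.exp (y * Complex.I))) :
    Complex.exp (((x - y : ℝ) : ℂ) * Complex.I) = -1 := by
  have hab : a = b := by
    have := congrArg norm h
    simpa [Complex.norm_exp_ofReal_mul_I, abs_of_pos ha, abs_of_pos hb] using this
  subst hab
  have ha' : (a : ℂ) ≠ 0 := by exact_mod_cast ha.ne'
  have : Complex.exp (x * Complex.I) = - Complex.exp (y * Complex.I) := by
    apply mul_left_cancel₀ ha'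
    rw [h]; ring
  push_cast
  rw [sub_mul, Complex.exp_sub, this, neg_div, div_self (Complex.exp_ne_zero _)]

lemma polar_pos (a b x y : ℝ) (ha : 0 < a) (hb : 0 < b)
    (h : (a : ℂ) * Complex.exp (x * Complex.I) = ((b : ℂ) * Complex.exp (y * Complex.I))) :
    Complex.exp (((x - y : ℝ) : ℂ) * Complex.I) = 1 := by
  have hab : a = b := by
    have := congrArg norm h
    simpa [Complex.norm_exp_ofReal_mul_I, abs_of_pos ha, abs_of_pos hb] using this
  subst hab
  have ha' : (a : ℂ) ≠ 0 := by exact_mod_cast ha.ne'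
  have : Complex.exp (x * Complex.I) = Complex.exp (y * Complex.I) := by
    apply mul_left_cancel₀ ha'
    rw [h]
  push_cast
  rw [sub_mul, Complex.exp_sub, this, div_self (Complex.exp_ne_zero _)]

lemma umlauf (L : ℝ) (hL : 0 < L) (z z' : ℝ → ℂ) (hd : ∀ s, HasDerivAt z (z' s) s)
    (hc : Continuous z') (hper : Function.Periodic z L)
    (hinj : ∀ s t, s < t → t < s + L → z t ≠ z s)
    (α : ℝ → ℝ) (hα : Continuous α) (hmono : StrictMono α)
    (hz : ∀ s, z' s = Complex.exp (α s * Complex.I)) :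
    ∀ s, α (s + L) = α s + 2 * π := by
  have hper' : Function.Periodic z' L := by
    intro s
    have h1 := (hd (s + L)).comp_add_const s L
    have : (fun x => z (x + L)) = z := funext hper
    rw [this] at h1
    exact h1.unique (hd s)
  have hzc : Continuous z := continuous_iff_continuousAt.2 fun x => (hd x).continuousAt
  let F : ℝ × ℝ → ℂ := fun p => ∫ t in (0:ℝ)..1, z' (p.1 + t * p.2)
  have hF : Continuous F := by
    apply intervalIntegral.continuous_parametric_intervalIntegral_of_continuous'
    simp only [Function.uncurry_def]
    fun_prop
  have hF0 : ∀ s, F (s, 0) = z' s := by intro s; simp [F]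
  have hFu : ∀ s u : ℝ, (u : ℂ) * F (s, u) = z (s + u) - z s := by
    intro s u
    have := intervalIntegral.integral_unitInterval_deriv_eq_sub (𝕜 := ℝ) (f := z) (f' := z') (z₀ := s) (z₁ := u)
      (by fun_prop) (fun t _ => hd _)
    rw [← this]
    simp [F]
  have hFper : ∀ s u, F (s + L, u) = F (s, u) := by
    intro s u
    simp only [F]
    congr 1
    ext t
    rw [show s + L + t * u = s + t * u + L by ring, hper']
  let S : Set (ℝ × ℝ) := Set.univ ×ˢ Set.Ioo (-L) L
  have hSc : Convex ℝ S := convex_univ.prod (convex_Ioo _ _)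
  have hSo : IsOpen S := isOpen_univ.prod isOpen_Ioo
  have hSm : ∀ s u, -L < u → u < L → (s, u) ∈ S := fun s u h1 h2 => ⟨trivial, h1, h2⟩
  have hFne : ∀ p ∈ S, F p ≠ 0 := by
    rintro ⟨s, u⟩ ⟨-, h1, h2⟩ h
    simp only at h1 h2
    have e := hFu s u
    rw [h, mul_zero] at e
    rcases lt_trichotomy u 0 with hu | hu | hu
    · exact hinj (s + u) s (by linarith) (by linarith) (sub_eq_zero.1 e.symm).symm
    · subst hu
      rw [hF0, hz] at h
      exact Complex.exp_ne_zero _ h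
    · exact hinj s (s + u) (by linarith) (by linarith) (sub_eq_zero.1 e.symm)
  obtain ⟨φ, hφ, hφF⟩ := exists_angle S hSc hSo ⟨(0, 0), hSm _ _ (by linarith) hL⟩ F hF hFne
  have hn : ∀ p ∈ S, 0 < ‖F p‖ := fun p hp => norm_pos_iff.2 (hFne p hp)
  have D0 : ∀ s t, φ (s, 0) - α s = φ (t, 0) - α t := by
    intro s t
    refine const_of_exp Set.univ isPreconnected_univ (fun s => φ (s, 0) - α s) ?_ 1 ?_ s trivial t
      trivial
    · refine ContinuousOn.sub (hφ.comp (by fun_prop) ?_) hα.continuousOn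
      intro x _
      exact hSm _ _ (by linarith) hL
    · intro p _
      have hm : (p, (0:ℝ)) ∈ S := hSm p 0 (by linarith) hL
      refine polar_pos ‖F (p, 0)‖ 1 _ _ (hn _ hm) one_pos ?_
      rw [← hφF _ hm, hF0, hz]; simp
  have D1 : ∀ p ∈ S, ∀ q ∈ S, φ (p.1 + L, p.2) - φ p = φ (q.1 + L, q.2) - φ q := by
    refine const_of_exp S hSc.isPreconnected (fun p => φ (p.1 + L, p.2) - φ p) ?_ 1 ?_
    · refine ContinuousOn.sub (hφ.comp (by fun_prop) ?_) hφ
      intro x hx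
      exact ⟨trivial, hx.2⟩
    · intro p hp
      have hm : (p.1 + L, p.2) ∈ S := ⟨trivial, hp.2⟩
      refine polar_pos _ _ _ _ (hn _ hm) (hn _ hp) ?_
      rw [← hφF _ hm, ← hφF _ hp, hFper]
  let S' : Set (ℝ × ℝ) := Set.univ ×ˢ Set.Ioo 0 L
  have hSpc : Convex ℝ S' := convex_univ.prod (convex_Ioo _ _)
  have hSS : S' ⊆ S := fun p hp => ⟨trivial, by linarith [hp.2.1], hp.2.2⟩
  have hS2 : ∀ p ∈ S', (p.1 + p.2, L - p.2) ∈ S' :=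
    fun p hp => ⟨trivial, sub_pos.2 hp.2.2, sub_lt_self _ hp.2.1⟩
  have E2 : ∀ p ∈ S', Complex.exp (((φ (p.1 + p.2, L - p.2) - φ p : ℝ) : ℂ) * Complex.I) = -1 := by
    intro p hp
    have hm := hSS (hS2 p hp)
    refine polar_neg ((L - p.2) * ‖F (p.1 + p.2, L - p.2)‖) (p.2 * ‖F p‖) _ _
      (mul_pos (sub_pos.2 hp.2.2) (hn _ hm)) (mul_pos hp.2.1 (hn _ (hSS hp))) ?_
    rw [Complex.ofReal_mul, Complex.ofReal_mul, mul_assoc, mul_assoc, ← hφF _ hm, ← hφF _ (hSS hp),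
      hFu]
    have := hFu p.1 p.2
    rw [Prod.mk.eta] at this
    rw [this, show p.1 + p.2 + (L - p.2) = p.1 + L by ring, hper]
    ring
  have D2 : ∀ p ∈ S', ∀ q ∈ S', φ (p.1 + p.2, L - p.2) - φ p = φ (q.1 + q.2, L - q.2) - φ q := by
    refine const_of_exp S' hSpc.isPreconnected (fun p => φ (p.1 + p.2, L - p.2) - φ p) ?_ (-1) E2
    refine ContinuousOn.sub (hφ.comp (by fun_prop) ?_) (hφ.mono hSS)
    intro x hx
    exact hSS (hS2 x hx)
  -- minimum
  obtain ⟨s₀, hs₀⟩ : ∃ s₀, ∀ s, (z s₀).im ≤ (z s).im := by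
    have hci : Continuous fun s => (z s).im := Complex.continuous_im.comp hzc
    obtain ⟨s₀, -, h⟩ := (isCompact_Icc (a := (0:ℝ)) (b := L)).exists_isMinOn
      ⟨0, by simp [hL.le]⟩ hci.continuousOn
    refine ⟨s₀, fun s => ?_⟩
    obtain ⟨y, hy, hyz⟩ := hper.exists_mem_Ico₀ hL s
    rw [hyz]
    exact h ⟨hy.1, hy.2.le⟩
  have him0 : (z' s₀).im = 0 := by
    have h1 : HasDerivAt (fun s => (z s).im) (z' s₀).im s₀ := by
      have := Complex.imCLM.hasFDerivAt.comp_hasDerivAt s₀ (hd s₀)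
      exact this
    exact IsLocalMin.hasDerivAt_eq_zero (Filter.Eventually.of_forall hs₀) h1
  have hsin : ∀ p ∈ S, (F p).im = ‖F p‖ * Real.sin (φ p) := by
    intro p hp
    conv_lhs => rw [hφF p hp]
    rw [Complex.im_ofReal_mul, Complex.exp_ofReal_mul_I_im]
  have hmid : ∀ s, (s, L / 2) ∈ S' := fun s => ⟨trivial, by simp [hL], by simp [hL]⟩
  have B1 : φ (s₀, L / 2) - φ (s₀, 0) ≤ π := by
    refine half_plane (Set.Ico 0 L) isPreconnected_Ico (fun u => φ (s₀, u)) ?_ ?_ 0 ⟨le_rfl, hL⟩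
      (L / 2) ⟨by linarith, by linarith⟩
    · refine hφ.comp (by fun_prop) ?_
      intro u hu
      exact hSm _ _ (by linarith [hu.1]) hu.2
    · intro u hu
      have hm := hSm s₀ u (by linarith [hu.1]) hu.2
      have h1 := hsin _ hm
      have h2 : 0 ≤ (F (s₀, u)).im := by
        rcases hu.1.eq_or_lt with h | h
        · rw [← h, hF0, him0]
        · have h3 := congrArg Complex.im (hFu s₀ u)
          rw [Complex.im_ofReal_mul, Complex.sub_im] at h3
          have := hs₀ (s₀ + u)
          by_contra! h4
          nlinarith
      by_contra! h4
      have := mul_neg_of_pos_of_neg (hn _ hm) h4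
      linarith
  have B2 : φ (s₀ + L, 0) - φ (s₀ + L / 2, L / 2) ≤ π := by
    have := half_plane_neg (Set.Ico 0 L) isPreconnected_Ico (fun u => φ (s₀ + L - u, u)) ?_ ?_
      (L / 2) ⟨by linarith, by linarith⟩ 0 ⟨le_rfl, hL⟩
    · simp only [sub_zero] at this
      rwa [show s₀ + L - L / 2 = s₀ + L / 2 by ring] at this
    · refine hφ.comp (by fun_prop) ?_
      intro u hu
      exact hSm _ _ (by linarith [hu.1]) hu.2
    · intro u hu
      have hm := hSm (s₀ + L - u) u (by linarith [hu.1]) hu.2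
      have h1 := hsin _ hm
      have h2 : (F (s₀ + L - u, u)).im ≤ 0 := by
        rcases hu.1.eq_or_lt with h | h
        · rw [← h, hF0, sub_zero, hper', him0]
        · have h3 := congrArg Complex.im (hFu (s₀ + L - u) u)
          rw [Complex.im_ofReal_mul, Complex.sub_im, sub_add_cancel, hper] at h3
          have := hs₀ (s₀ + L - u)
          by_contra! h4
          nlinarith
      by_contra! h4
      have := mul_pos (hn _ hm) h4
      linarith
  set d := φ (0 + L / 2, L - L / 2) - φ (0, L / 2) with hd'
  have e1 := D2 _ (hmid (0 + L / 2)) _ (hmid 0)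
  have e2 := D2 _ (hmid s₀) _ (hmid 0)
  have e3 := E2 _ (hmid 0)
  have e4 := D1 _ (hSS (hmid 0)) (s₀, 0) (hSm _ _ (by linarith) hL)
  have hh : L - L / 2 = L / 2 := by ring
  simp only [hh] at e1 e2 e3 e4 hd'
  rw [show 0 + L / 2 + L / 2 = 0 + L by ring] at e1
  have e5 := D0 (s₀ + L) s₀
  have e6 := hmono (show s₀ < s₀ + L by linarith)
  rw [← hd'] at e1 e2 e3
  have hdpi : d = π := by
    have : Complex.exp (d * Complex.I) = Complex.exp (π * Complex.I) := by
      rw [e3, Complex.exp_pi_mul_I]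
    obtain ⟨n, hn⟩ := Complex.exp_eq_exp_iff_exists_int.1 this
    have h2 : d = π + n * (2 * π) := by
      have := congrArg Complex.im hn
      simpa using this
    have p0 := Real.pi_pos
    have l1 : (-1 : ℝ) < n := by
      by_contra! h
      nlinarith
    have l2 : (n : ℝ) < 1 := by
      by_contra! h
      nlinarith
    have l3 : n = 0 := by
      have : -1 < n := by exact_mod_cast l1
      have : n < 1 := by exact_mod_cast l2
      omega
    rw [h2, l3]; simp
  intro s
  have e7 := D1 (s, 0) (hSm _ _ (by linarith) hL) (s₀, 0) (hSm _ _ (by linarith) hL)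
  have e8 := D0 (s + L) s
  simp only at e7
  linarith

lemma inj_of_injOn (L : ℝ) (hL : 0 < L) {E : Type*} (z : ℝ → E) (hper : Function.Periodic z L)
    (h : Set.InjOn z (Set.Ico 0 L)) : ∀ s t, s < t → t < s + L → z t ≠ z s := by
  intro s t h1 h2 he
  set n := ⌊s / L⌋ with hn
  have a1 : n * L ≤ s := by
    have := Int.floor_le (s / L)
    rwa [le_div_iff₀ hL] at this
  have a2 : s < (n + 1) * L := by
    have := Int.lt_floor_add_one (s / L)
    rwa [div_lt_iff₀ hL] at this
  have b1 : z (s - n * L) = z s := hper.sub_int_mul_eq n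
  have b2 : z (t - n * L) = z t := hper.sub_int_mul_eq n
  have b3 : z (t - n * L - L) = z t := by rw [hper.sub_eq, b2]
  have ms : s - n * L ∈ Set.Ico 0 L := ⟨by linarith, by linarith⟩
  by_cases hlt : t - n * L < L
  · have := h ⟨by linarith, hlt⟩ ms (b2.trans (he.trans b1.symm))
    linarith
  · have := h ⟨by linarith, by linarith⟩ ms (b3.trans (he.trans b1.symm))
    linarith

lemma final_calc (L : ℝ) (x y c d k : ℝ → ℝ)
    (hx : ∀ s, HasDerivAt x (c s) s) (hy : ∀ s, HasDerivAt y (d s) s)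
    (hc : ∀ s, HasDerivAt c (-(k s * d s)) s) (hd : ∀ s, HasDerivAt d (k s * c s) s)
    (hu : ∀ s, c s ^ 2 + d s ^ 2 = 1) (hk : Continuous k) (kpos : ∀ s, 0 < k s)
    (px : Function.Periodic x L) (py : Function.Periodic y L)
    (pc : Function.Periodic c L) (pd : Function.Periodic d L)
    (β : ℝ → ℝ) (hβ : ∀ s, HasDerivAt β (k s) s) (β0 : β 0 = 0)
    (βL : ∀ s, β (s + L) = β s + 2 * π) :
    (2 / π) * L ^ 2 ≤ (∫ s in (0:ℝ)..L, (k s)⁻¹) + 3 * ∫ s in (0:ℝ)..L, (x s * d s - y s * c s) := by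
  have cβ : Continuous β := continuous_iff_continuousAt.2 fun x => (hβ x).continuousAt
  have mβ : StrictMono β := strictMono_of_deriv_pos fun s => by rw [(hβ s).deriv]; exact kpos s
  have up : ∀ n : ℕ, β (n * L) = n * (2 * π) := by
    intro n
    induction n with
    | zero => simp [β0]
    | succ n ih => push_cast; rw [add_mul, one_mul, βL, ih]; ring
  have dn : ∀ n : ℕ, β (-(n * L)) = -(n * (2 * π)) := by
    intro n
    induction n with
    | zero => simp [β0]
    | succ n ih =>
      have := βL (-((n + 1 : ℕ) * L))
      push_cast at this ⊢
      rw [show -(((n:ℝ) + 1) * L) + L = -(n * L) by ring, ih] at this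
      linarith
  have sβ : Function.Surjective β := by
    intro v
    obtain ⟨n, hn⟩ := exists_nat_ge (|v| / (2 * π))
    rw [div_le_iff₀ Real.two_pi_pos] at hn
    apply mem_range_of_exists_le_of_exists_ge cβ
    · exact ⟨-(n * L), by rw [dn]; linarith [neg_abs_le v]⟩
    · exact ⟨n * L, by rw [up]; linarith [le_abs_self v]⟩
  let e := mβ.orderIsoOfSurjective β sβ
  let σ : ℝ → ℝ := e.symm
  have βσ : ∀ t, β (σ t) = t := fun t => e.apply_symm_apply t
  have σβ : ∀ t, σ (β t) = t := fun t => e.symm_apply_apply t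
  have cσ : Continuous σ := e.symm.continuous
  have hσ : ∀ t, HasDerivAt σ (k (σ t))⁻¹ t := fun t =>
    HasDerivAt.of_local_left_inverse cσ.continuousAt (hβ (σ t)) (kpos _).ne'
      (Filter.Eventually.of_forall βσ)
  have σ0 : σ 0 = 0 := by rw [← β0, σβ, β0]
  have σL : σ (2 * π) = L := by
    have := βL 0
    rw [zero_add, β0, zero_add] at this
    rw [← this, σβ]
  have cx : Continuous x := continuous_iff_continuousAt.2 fun x => (hx x).continuousAt
  have cy : Continuous y := continuous_iff_continuousAt.2 fun x => (hy x).continuousAt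
  have cc : Continuous c := continuous_iff_continuousAt.2 fun x => (hc x).continuousAt
  have cd : Continuous d := continuous_iff_continuousAt.2 fun x => (hd x).continuousAt
  have cki : Continuous fun s => (k s)⁻¹ := hk.inv₀ fun s => (kpos s).ne'
  let h : ℝ → ℝ := fun s => x s * d s - y s * c s
  let p : ℝ → ℝ := fun s => x s * c s + y s * d s
  have ch : Continuous h := by fun_prop
  have cp : Continuous p := by fun_prop
  have hh : ∀ s, HasDerivAt h (k s * p s) s := by
    intro s
    refine (((hx s).mul (hd s)).sub ((hy s).mul (hc s))).congr_deriv ?_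
    simp only [p]; ring
  have hp : ∀ s, HasDerivAt p (1 - k s * h s) s := by
    intro s
    refine (((hx s).mul (hc s)).add ((hy s).mul (hd s))).congr_deriv ?_
    simp only [h]; linear_combination hu s
  let r : ℝ → ℝ := fun t => (k (σ t))⁻¹
  have cr : Continuous r := cki.comp cσ
  let H : ℝ → ℝ := fun t => h (σ t)
  let P : ℝ → ℝ := fun t => p (σ t)
  have cH : Continuous H := ch.comp cσ
  have cP : Continuous P := cp.comp cσ
  have hH : ∀ t, HasDerivAt H (P t) t := by
    intro t
    refine ((hh (σ t)).comp t (hσ t)).congr_deriv ?_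
    have := (kpos (σ t)).ne'
    simp only [P]; field_simp
  have hP : ∀ t, HasDerivAt P (r t - H t) t := by
    intro t
    refine ((hp (σ t)).comp t (hσ t)).congr_deriv ?_
    have := (kpos (σ t)).ne'
    simp only [r, H]; field_simp
  have hL0 : h L = h 0 := by
    have a := px 0; have b := py 0; have a2 := pc 0; have b2 := pd 0
    rw [zero_add] at a b a2 b2
    simp only [h, a, b, a2, b2]
  have pL0 : p L = p 0 := by
    have a := px 0; have b := py 0; have a2 := pc 0; have b2 := pd 0
    rw [zero_add] at a b a2 b2
    simp only [p, a, b, a2, b2]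
  have H0 : H (2 * π) = H 0 := by simp only [H, σ0, σL, hL0]
  have P0 : P (2 * π) = P 0 := by simp only [P, σ0, σL, pL0]
  have key := fourier_ineq H P (fun t => r t - H t) hH hP (cr.sub cH) H0 P0
  have cov : ∀ g : ℝ → ℝ, Continuous g →
      ∫ t in (0:ℝ)..2 * π, g (σ t) * r t = ∫ s in (0:ℝ)..L, g s := by
    intro g hg
    have := intervalIntegral.integral_comp_mul_deriv (a := 0) (b := 2 * π) (f := σ) (f' := r)
      (g := g) (fun t _ => hσ t) cr.continuousOn hg
    rw [σ0, σL] at this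
    exact this
  have i1 : ∫ t in (0:ℝ)..2 * π, r t = L := by
    have := cov (fun _ => 1) continuous_const
    simpa using this
  have i2 := cov _ cki
  have i3 := cov h ch
  have i4 : ∫ t in (0:ℝ)..2 * π, (r t - H t) = 0 := by
    rw [intervalIntegral.integral_eq_sub_of_hasDerivAt (fun t _ => hP t)
      ((cr.sub cH).intervalIntegrable _ _), P0, sub_self]
  have i5 : ∫ t in (0:ℝ)..2 * π, (P t * P t + H t * (r t - H t)) = 0 := by
    rw [intervalIntegral.integral_eq_sub_of_hasDerivAt (fun t _ => (hH t).mul (hP t))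
      (Continuous.intervalIntegrable (by fun_prop) _ _)]
    simp only [Pi.mul_apply, H0, P0, sub_self]
  rw [intervalIntegral.integral_sub (cr.intervalIntegrable _ _) (cH.intervalIntegrable _ _),
    i1] at i4
  have i6 : ∫ t in (0:ℝ)..2 * π, H t = L := by linarith
  rw [i6] at key
  have i7 : (∫ x in (0:ℝ)..2 * π, (r x - H x) ^ 2)
      - 5 * (∫ x in (0:ℝ)..2 * π, P x ^ 2) + 4 * (∫ x in (0:ℝ)..2 * π, H x ^ 2)
      = (∫ t in (0:ℝ)..2 * π, r t * r t) + 3 * (∫ t in (0:ℝ)..2 * π, H t * r t)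
       - 5 * ∫ t in (0:ℝ)..2 * π, (P t * P t + H t * (r t - H t)) := by
    simp only [← intervalIntegral.integral_const_mul]
    rw [← intervalIntegral.integral_sub, ← intervalIntegral.integral_add,
      ← intervalIntegral.integral_add, ← intervalIntegral.integral_sub]
    · congr 1
      ext t
      ring
    all_goals exact Continuous.intervalIntegrable (by fun_prop) _ _
  rw [i7, i5] at key
  have i2' : ∫ t in (0:ℝ)..2 * π, r t * r t = ∫ s in (0:ℝ)..L, (k s)⁻¹ := i2
  have i3' : ∫ t in (0:ℝ)..2 * π, H t * r t = ∫ s in (0:ℝ)..L, (x s * d s - y s * c s) := i3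
  rw [i2', i3'] at key
  linarith

/-- Let `C` be a smooth closed convex curve in `ℝ²`, parametrized by
arclength by `γ` with period `L` (its length), simple, with positive curvature
`κ = det(γ', γ'')`, and enclosed (signed) area `A = (1/2)∮ (γ₁ γ₂' − γ₂ γ₁')`.  Then
`(2/π)(L² − 4πA) ≤ ∫_C κ⁻¹ ds − 2A`. -/
theorem isoperimetric_deficit_ros (L A : ℝ) (hL : 0 < L)
    (γ : ℝ → ℝ × ℝ) (hγ : ContDiff ℝ (⊤ : ℕ∞) γ)
    (hper : Function.Periodic γ L)
    (hsimple : Set.InjOn γ (Set.Ico 0 L))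
    (hunit : ∀ s : ℝ, ((deriv γ s).1) ^ 2 + ((deriv γ s).2) ^ 2 = 1)
    (hconvex : ∀ s : ℝ,
      0 < (deriv γ s).1 * (deriv (deriv γ) s).2 - (deriv γ s).2 * (deriv (deriv γ) s).1)
    (hA : A = (1 / 2) *
      ∫ s in (0 : ℝ)..L, ((γ s).1 * (deriv γ s).2 - (γ s).2 * (deriv γ s).1)) :
    (2 / π) * (L ^ 2 - 4 * π * A) ≤
      (∫ s in (0 : ℝ)..L,
          ((deriv γ s).1 * (deriv (deriv γ) s).2 -
            (deriv γ s).2 * (deriv (deriv γ) s).1)⁻¹) - 2 * A := by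
  have g1 : ContDiff ℝ (⊤ : ℕ∞) (deriv γ) := (contDiff_infty_iff_deriv.1 hγ).2
  have g2 : ContDiff ℝ (⊤ : ℕ∞) (deriv (deriv γ)) := (contDiff_infty_iff_deriv.1 g1).2
  have d1 : ∀ s, HasDerivAt γ (deriv γ s) s := fun s =>
    ((contDiff_infty_iff_deriv.1 hγ).1 s).hasDerivAt
  have d2 : ∀ s, HasDerivAt (deriv γ) (deriv (deriv γ) s) s := fun s =>
    ((contDiff_infty_iff_deriv.1 g1).1 s).hasDerivAt
  have c0 := hγ.continuous
  have c1 := g1.continuous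
  have c2 := g2.continuous
  let k : ℝ → ℝ := fun s => (deriv γ s).1 * (deriv (deriv γ) s).2 -
    (deriv γ s).2 * (deriv (deriv γ) s).1
  have ck : Continuous k := by fun_prop
  have hx : ∀ s, HasDerivAt (fun s => (γ s).1) (deriv γ s).1 s := fun s => (d1 s).fst
  have hy : ∀ s, HasDerivAt (fun s => (γ s).2) (deriv γ s).2 s := fun s => (d1 s).snd
  have hc' : ∀ s, HasDerivAt (fun s => (deriv γ s).1) (deriv (deriv γ) s).1 s :=
    fun s => (d2 s).fst
  have hd' : ∀ s, HasDerivAt (fun s => (deriv γ s).2) (deriv (deriv γ) s).2 s :=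
    fun s => (d2 s).snd
  have orth : ∀ s, (deriv γ s).1 * (deriv (deriv γ) s).1 +
      (deriv γ s).2 * (deriv (deriv γ) s).2 = 0 := by
    intro s
    have h1 := ((hc' s).pow 2).add ((hd' s).pow 2)
    have h2 : ((fun s => (deriv γ s).1) ^ 2 + (fun s => (deriv γ s).2) ^ 2 : ℝ → ℝ) =
        fun _ => 1 := funext hunit
    rw [h2] at h1
    have := h1.unique (hasDerivAt_const s (1:ℝ))
    norm_num at this
    linarith
  have hc : ∀ s, HasDerivAt (fun s => (deriv γ s).1) (-(k s * (deriv γ s).2)) s := fun s =>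
    (hc' s).congr_deriv (by
      simp only [k]
      linear_combination (-(deriv (deriv γ) s).1) * hunit s + (deriv γ s).1 * orth s)
  have hd : ∀ s, HasDerivAt (fun s => (deriv γ s).2) (k s * (deriv γ s).1) s := fun s =>
    (hd' s).congr_deriv (by
      simp only [k]
      linear_combination (-(deriv (deriv γ) s).2) * hunit s + (deriv γ s).2 * orth s)
  have pT : Function.Periodic (deriv γ) L := by
    intro s
    have h1 := (d1 (s + L)).comp_add_const s L
    have : (fun x => γ (x + L)) = γ := funext hper
    rw [this] at h1
    exact h1.unique (d1 s)
  let β : ℝ → ℝ := fun s => ∫ t in (0:ℝ)..s, k t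
  have hβ : ∀ s, HasDerivAt β (k s) s := fun s => (ck.integral_hasStrictDerivAt 0 s).hasDerivAt
  have β0 : β 0 = 0 := by simp [β]
  have cβ : Continuous β := continuous_iff_continuousAt.2 fun x => (hβ x).continuousAt
  have mβ : StrictMono β := strictMono_of_deriv_pos fun s => by rw [(hβ s).deriv]; exact hconvex s
  -- complex form
  let z : ℝ → ℂ := fun s => ((γ s).1 : ℂ) + ((γ s).2 : ℂ) * Complex.I
  let z' : ℝ → ℂ := fun s => ((deriv γ s).1 : ℂ) + ((deriv γ s).2 : ℂ) * Complex.I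
  have hz : ∀ s, HasDerivAt z (z' s) s := fun s =>
    (hx s).ofReal_comp.add ((hy s).ofReal_comp.mul_const _)
  have cz' : Continuous z' := by fun_prop
  have hz' : ∀ s, HasDerivAt z' (k s * Complex.I * z' s) s := fun s =>
    ((hc s).ofReal_comp.add ((hd s).ofReal_comp.mul_const _)).congr_deriv (by
      simp only [z']
      push_cast
      linear_combination (-(k s : ℂ) * (deriv γ s).2) * Complex.I_sq)
  have pz : Function.Periodic z L := fun s => by simp only [z, hper s]
  have injz : Set.InjOn z (Set.Ico 0 L) := by
    intro s hs t ht hst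
    apply hsimple hs ht
    have h1 := congrArg Complex.re hst
    have h2 := congrArg Complex.im hst
    simp [z] at h1 h2
    exact Prod.ext h1 h2
  have hconst : ∀ s, z' s * Complex.exp (-(β s * Complex.I)) = z' 0 := by
    intro s
    have hD : ∀ s, HasDerivAt (fun s => z' s * Complex.exp (-(β s * Complex.I))) 0 s := fun s =>
      ((hz' s).mul (((hβ s).ofReal_comp.mul_const Complex.I).neg.cexp)).congr_deriv (by ring)
    have := is_const_of_deriv_eq_zero (fun s => (hD s).differentiableAt) (fun s => (hD s).deriv) s 0
    simpa [β0] using this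
  have hn0 : ‖z' 0‖ = 1 := by
    have : ‖z' 0‖ ^ 2 = 1 := by
      rw [← Complex.normSq_eq_norm_sq, Complex.normSq_add_mul_I, hunit]
    exact (pow_eq_one_iff_of_nonneg (norm_nonneg _) two_ne_zero).1 this
  have hzexp : ∀ s, z' s = Complex.exp (((Complex.arg (z' 0) + β s : ℝ) : ℂ) * Complex.I) := by
    intro s
    have h0 : z' 0 = Complex.exp (Complex.arg (z' 0) * Complex.I) := by
      have := Complex.norm_mul_exp_arg_mul_I (z' 0)
      rw [hn0] at this
      simpa using this.symm
    push_cast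
    rw [add_mul, Complex.exp_add, ← h0, ← hconst s, mul_assoc, ← Complex.exp_add]
    simp
  have um := umlauf L hL z z' hz cz' pz (inj_of_injOn L hL z pz injz)
    (fun s => Complex.arg (z' 0) + β s) (continuous_const.add cβ)
    (fun a b hab => by have := mβ hab; simp only; linarith) hzexp
  have fin := final_calc L (fun s => (γ s).1) (fun s => (γ s).2) (fun s => (deriv γ s).1)
    (fun s => (deriv γ s).2) k hx hy hc hd hunit ck hconvex
    (fun s => by simp only [hper s]) (fun s => by simp only [hper s])
    (fun s => by simp only [pT s]) (fun s => by simp only [pT s]) β hβ β0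
    (fun s => by have := um s; linarith)
  have hA' : ∫ s in (0 : ℝ)..L, ((γ s).1 * (deriv γ s).2 - (γ s).2 * (deriv γ s).1) = 2 * A := by
    rw [hA]; ring
  rw [hA'] at fin
  have e : (2 / π) * (L ^ 2 - 4 * π * A) = (2 / π) * L ^ 2 - 8 * A := by
    have := Real.pi_ne_zero
    field_simp
    ring
  rw [e]
  simp only [k] at fin
  linarith
end
end

section
/- Let K be a smooth convex body in ℝ^d with boundary Σ = ∂K a closed convex hypersurface. Then ((d−1)/(d+1)) [ ∫_Σ (H_{d−2})²/H_{d−1} dS − (1/|𝕊^{d−1}|)(∫_Σ H_{d−2} dS)² ] − [ (1/|𝕊^{d−1}|)(∫_Σ H_{d−2} dS)² − ∫_Σ H_{d−3} dS ] ≥ (2(d+2)/(d+1)) [ (1/|𝕊^{d−1}|)(∫_Σ H_{d−2} dS)² − ∫_Σ H_{d−3} dS − ((d+1)/(d−1)) δ₂(K, B(K))² ], where H_k is the normalized k-th mean curvature of Σ, B(K) is the Steiner ball of K, and δ₂ is the L² distance between support functions. -/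
open MeasureTheory Real
open scoped RealInnerProductSpace Pointwise

noncomputable section

/-- The surface (area) measure on the unit sphere `𝕊^{d-1} ⊂ ℝ^d`. -/
def sphMeasure (d : ℕ) : Measure (Metric.sphere (0 : EuclideanSpace ℝ (Fin d)) 1) :=
  (volume : Measure (EuclideanSpace ℝ (Fin d))).toSphere

/-- The degree-zero homogeneous extension of a function on the unit sphere to `ℝ^d`
(extended by `0` at the origin). -/
def ext0 {d : ℕ} (F : Metric.sphere (0 : EuclideanSpace ℝ (Fin d)) 1 → ℝ)
    (x : EuclideanSpace ℝ (Fin d)) : ℝ :=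
  letI := Classical.dec (x = 0)
  if hx : x = 0 then 0
  else F ⟨‖x‖⁻¹ • x, by
    simp [mem_sphere_zero_iff_norm, norm_smul, abs_of_nonneg, inv_mul_cancel₀,
      norm_ne_zero_iff.mpr hx]⟩

/-- The Euclidean Laplacian of `f : ℝ^d → ℝ`. -/
def eucLap {d : ℕ} (f : EuclideanSpace ℝ (Fin d) → ℝ) (x : EuclideanSpace ℝ (Fin d)) : ℝ :=
  ∑ i, fderiv ℝ (fun y => fderiv ℝ f y (EuclideanSpace.single i 1)) x (EuclideanSpace.single i 1)

/-- The Laplace–Beltrami operator (spherical Laplacian) on the unit sphere `𝕊^{d-1}`: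
for `F : 𝕊^{d-1} → ℝ`, `sphLap F` is the restriction to the sphere of the Euclidean
Laplacian of the degree-zero homogeneous extension of `F`.  (This is the standard
characterization of the spherical Laplacian.) -/
def sphLap {d : ℕ} (F : Metric.sphere (0 : EuclideanSpace ℝ (Fin d)) 1 → ℝ) :
    Metric.sphere (0 : EuclideanSpace ℝ (Fin d)) 1 → ℝ :=
  fun θ => eucLap (ext0 F) θ.val

/-- A function on the unit sphere is smooth iff its degree-zero homogeneous extension is
smooth away from the origin. -/
def SphSmooth {d : ℕ} (F : Metric.sphere (0 : EuclideanSpace ℝ (Fin d)) 1 → ℝ) : Prop :=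
  ContDiffOn ℝ (⊤ : ℕ∞) (ext0 F) {(0 : EuclideanSpace ℝ (Fin d))}ᶜ

/-- The support function of a convex body `K ⊆ ℝ^d`, as a (1-homogeneous) function on `ℝ^d`:
`h_K(x) = sup_{y ∈ K} ⟨y, x⟩`. -/
def suppFn {d : ℕ} (K : ConvexBody (EuclideanSpace ℝ (Fin d)))
    (x : EuclideanSpace ℝ (Fin d)) : ℝ :=
  sSup ((fun y => ⟪y, x⟫) '' (K : Set (EuclideanSpace ℝ (Fin d))))

/-- The support function of `K`, restricted to the unit sphere. -/
def suppS {d : ℕ} (K : ConvexBody (EuclideanSpace ℝ (Fin d))) :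
    Metric.sphere (0 : EuclideanSpace ℝ (Fin d)) 1 → ℝ :=
  fun θ => suppFn K θ.val

/-- `K` is a smooth convex body: it has nonempty interior and its support function is
smooth away from the origin (equivalently, its boundary `Σ = ∂K` is a smooth closed
convex hypersurface). -/
def SmoothBody {d : ℕ} (K : ConvexBody (EuclideanSpace ℝ (Fin d))) : Prop :=
  (interior (K : Set (EuclideanSpace ℝ (Fin d)))).Nonempty ∧
    ContDiffOn ℝ (⊤ : ℕ∞) (suppFn K) {(0 : EuclideanSpace ℝ (Fin d))}ᶜ

/-- The area `|𝕊^{d-1}|` of the unit sphere in `ℝ^d`. -/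
def sphArea (d : ℕ) : ℝ := (sphMeasure d Set.univ).toReal

/-- The total (normalized) `(d-2)`-nd mean curvature `∫_Σ H_{d-2} dS` of `Σ = ∂K`,
expressed via the support function: `∫_Σ H_{d-2} dS = ∫_{𝕊^{d-1}} h dθ`. -/
def intH2 {d : ℕ} (K : ConvexBody (EuclideanSpace ℝ (Fin d))) : ℝ :=
  ∫ θ, suppS K θ ∂(sphMeasure d)

/-- The total (normalized) `(d-3)`-rd mean curvature `∫_Σ H_{d-3} dS` of `Σ = ∂K`,
expressed via the support function:
`∫_Σ H_{d-3} dS = (1/(d-1)) ∫_{𝕊^{d-1}} ((d-1) h² + h Δh) dθ`. -/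
def intH3 {d : ℕ} (K : ConvexBody (EuclideanSpace ℝ (Fin d))) : ℝ :=
  (1 / ((d : ℝ) - 1)) *
    ∫ θ, (((d : ℝ) - 1) * (suppS K θ) ^ 2 + suppS K θ * sphLap (suppS K) θ) ∂(sphMeasure d)

/-- The curvature integral `∫_Σ H_{d-2}²/H_{d-1} dS` of `Σ = ∂K`, expressed via the
support function: `H_{d-2}/H_{d-1} = h + Δh/(d-1)` and `dθ = H_{d-1} dS`, so
`∫_Σ H_{d-2}²/H_{d-1} dS = ∫_{𝕊^{d-1}} (h + Δh/(d-1))² dθ`. -/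
def intH2sq {d : ℕ} (K : ConvexBody (EuclideanSpace ℝ (Fin d))) : ℝ :=
  ∫ θ, (suppS K θ + sphLap (suppS K) θ / ((d : ℝ) - 1)) ^ 2 ∂(sphMeasure d)

/-- The Steiner point `z(K) = (1/|𝔹^d|) ∫_{𝕊^{d-1}} h_K(θ) θ dθ`. -/
def steinerPt {d : ℕ} (K : ConvexBody (EuclideanSpace ℝ (Fin d))) :
    EuclideanSpace ℝ (Fin d) :=
  ((volume (Metric.ball (0 : EuclideanSpace ℝ (Fin d)) 1)).toReal)⁻¹ •
    ∫ θ, suppS K θ • (θ : EuclideanSpace ℝ (Fin d)) ∂(sphMeasure d)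

/-- The mean width `w̄(K) = (2/|𝕊^{d-1}|) ∫_{𝕊^{d-1}} h_K dθ`. -/
def meanWidth {d : ℕ} (K : ConvexBody (EuclideanSpace ℝ (Fin d))) : ℝ :=
  (2 / sphArea d) * ∫ θ, suppS K θ ∂(sphMeasure d)

/-- The support function of the Steiner ball `B(K)` of `K` (the ball centered at the
Steiner point `z(K)` with diameter the mean width `w̄(K)`):
`h_{B(K)}(θ) = w̄(K)/2 + z(K)·θ`. -/
def steinerBallSupp {d : ℕ} (K : ConvexBody (EuclideanSpace ℝ (Fin d))) :
    Metric.sphere (0 : EuclideanSpace ℝ (Fin d)) 1 → ℝ :=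
  fun θ => meanWidth K / 2 + ⟪steinerPt K, θ.val⟫

/-- The squared `L²` distance `δ₂(K, B(K))²` between `K` and its Steiner ball. -/
def delta2SqSteiner {d : ℕ} (K : ConvexBody (EuclideanSpace ℝ (Fin d))) : ℝ :=
  ∫ θ, (suppS K θ - steinerBallSupp K θ) ^ 2 ∂(sphMeasure d)

/-- The squared `L²` distance `δ₂(K, L)² = ∫_{𝕊^{d-1}} (h_K - h_L)² dθ`. -/
def delta2Sq {d : ℕ} (K L : ConvexBody (EuclideanSpace ℝ (Fin d))) : ℝ :=
  ∫ θ, (suppS K θ - suppS L θ) ^ 2 ∂(sphMeasure d)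


section helpers
open Filter Topology

theorem abstract_gap {H : Type*} [NormedAddCommGroup H] [InnerProductSpace ℝ H] [CompleteSpace H]
    (R : H → H → Prop) (V : ℕ → Submodule ℝ H) [∀ m, FiniteDimensional ℝ (V m)]
    (hV : Monotone V) (hdense : ⊤ ≤ (⨆ m, V m).topologicalClosure)
    (lam : ℕ → ℝ)
    (hsymm : ∀ x x' y y', R x x' → R y y' → ⟪x', y⟫ = ⟪x, y'⟫)
    (h0 : ∀ x ∈ V 0, ∃ x' ∈ V 0, R x x')
    (hstep : ∀ m, ∀ x ∈ V (m+1), ∃ y ∈ V m, R x (-(lam (m+1)) • x + y))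
    (α β : ℝ) (hab : ∀ m, 1 ≤ m → 0 ≤ (α - lam (m+1)) * (β - lam (m+1)))
    (x x' : H) (hx : R x x') (hx1 : ∀ v ∈ V 1, ⟪x, v⟫ = 0) :
    0 ≤ ⟪x' + α • x, x' + β • x⟫ := by
  have hinv : ∀ m, ∀ v ∈ V m, ∃ v' ∈ V m, R v v' := by
    intro m v hv
    cases m with
    | zero => exact h0 v hv
    | succ m =>
      obtain ⟨y, hy, hR⟩ := hstep m v hv
      exact ⟨_, (V (m+1)).add_mem ((V (m+1)).smul_mem _ hv) (hV (Nat.le_succ m) hy), hR⟩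
  have heig : ∀ m, ∀ w ∈ V (m+1), (∀ v ∈ V m, ⟪w, v⟫ = 0) → R w (-(lam (m+1)) • w) := by
    intro m w hw hort
    obtain ⟨y, hy, hR⟩ := hstep m w hw
    obtain ⟨y', hy', hRy⟩ := hinv m y hy
    have h1 := hsymm _ _ _ _ hR hRy
    rw [hort y' hy', inner_add_left, inner_smul_left, hort y hy] at h1
    have : y = 0 := by simpa using h1
    rw [this, add_zero] at hR
    exact hR
  -- increments of projections
  have hinc : ∀ (γ : ℝ) m, (V (m+1)).starProjection (x' + γ • x) - (V m).starProjection (x' + γ • x)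
      = (γ - lam (m+1)) • ((V (m+1)).starProjection x - (V m).starProjection x) := by
    intro γ m
    have key : ∀ z : H, (V (m+1)).starProjection z - (V m).starProjection z ∈ V (m+1) :=
      fun z => (V (m+1)).sub_mem (Submodule.starProjection_apply_mem _ _)
        (hV (Nat.le_succ m) (Submodule.starProjection_apply_mem _ _))
    have keyo : ∀ z : H, ∀ v ∈ V m, ⟪(V (m+1)).starProjection z - (V m).starProjection z, v⟫ = 0 := by
      intro z v hv
      have e1 := Submodule.starProjection_inner_eq_zero (K := V m) z v hv
      have e2 := Submodule.starProjection_inner_eq_zero (K := V (m+1)) z v (hV (Nat.le_succ m) hv)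
      rw [inner_sub_left] at *
      linarith
    set w := ((V (m+1)).starProjection (x' + γ • x) - (V m).starProjection (x' + γ • x))
      - (γ - lam (m+1)) • ((V (m+1)).starProjection x - (V m).starProjection x) with hw
    have hwV : w ∈ V (m+1) := (V (m+1)).sub_mem (key _) ((V (m+1)).smul_mem _ (key _))
    have hwo : ∀ v ∈ V m, ⟪w, v⟫ = 0 := by
      intro v hv
      rw [hw, inner_sub_left, inner_smul_left, keyo _ v hv, keyo _ v hv]; simp
    have hR := heig m w hwV hwo
    have hs := hsymm _ _ _ _ hx hR
    rw [inner_smul_right] at hs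
    have pr : ∀ z : H, ⟪(V (m+1)).starProjection z - (V m).starProjection z, w⟫ = ⟪z, w⟫ := by
      intro z
      have e1 := Submodule.starProjection_inner_eq_zero (K := V (m+1)) z w hwV
      have e2 := hwo _ (Submodule.starProjection_apply_mem (V m) z)
      rw [real_inner_comm] at e2
      rw [inner_sub_left] at *
      linarith
    have : ⟪w, w⟫ = 0 := by
      conv_lhs => rw [hw]
      rw [inner_sub_left, inner_smul_left, pr, pr, inner_add_left, inner_smul_left, hs]
      simp; ring
    exact sub_eq_zero.mp (inner_self_eq_zero.mp this)
  have hbase : ∀ γ : ℝ, (V 1).starProjection (x' + γ • x) = 0 := by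
    intro γ
    rw [Submodule.starProjection_apply_eq_zero_iff, Submodule.mem_orthogonal']
    intro v hv
    obtain ⟨v', hv', hR⟩ := hinv 1 v hv
    rw [inner_add_left, inner_smul_left, hx1 v hv, hsymm _ _ _ _ hx hR, hx1 v' hv']; simp
  have hpos : ∀ m, 0 ≤ ⟪(V (m+1)).starProjection (x' + α • x), (V (m+1)).starProjection (x' + β • x)⟫ := by
    intro m
    induction m with
    | zero => rw [hbase]; simp
    | succ m ih =>
      have e1 := hinc α (m+1)
      have e2 := hinc β (m+1)
      set w := ((V (m+1+1)).starProjection x - (V (m+1)).starProjection x) with hw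
      have keyo : ∀ v ∈ V (m+1), ⟪w, v⟫ = 0 := by
        intro v hv
        have e1 := Submodule.starProjection_inner_eq_zero (K := V (m+1)) x v hv
        have e2 := Submodule.starProjection_inner_eq_zero (K := V (m+1+1)) x v (hV (Nat.le_succ _) hv)
        rw [hw]
        rw [inner_sub_left] at *
        linarith
      rw [sub_eq_iff_eq_add] at e1 e2
      rw [e1, e2, inner_add_left, inner_add_right, inner_add_right, inner_smul_left, inner_smul_left,
        inner_smul_right, inner_smul_right, keyo _ (Submodule.starProjection_apply_mem _ _),
        real_inner_comm w ((V (m+1)).starProjection (x' + α • x)),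
        keyo _ (Submodule.starProjection_apply_mem _ _)]
      have := mul_nonneg (hab (m+1) (by omega)) (real_inner_self_nonneg (x := w))
      simp only [conj_trivial]
      linarith
  have lim : ∀ z : H, Tendsto (fun m => (V (m+1)).starProjection z) atTop (𝓝 z) := fun z =>
    (tendsto_add_atTop_iff_nat 1).mpr (Submodule.starProjection_tendsto_self V hV z hdense)
  exact ge_of_tendsto' ((lim _).inner (lim _)) hpos

/-- Partial derivative. -/
def pd {d : ℕ} (i : Fin d) (f : EuclideanSpace ℝ (Fin d) → ℝ) (x : EuclideanSpace ℝ (Fin d)) : ℝ :=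
  fderiv ℝ f x (EuclideanSpace.single i 1)

/-- Smooth away from the origin. -/
def Sm {d : ℕ} (f : EuclideanSpace ℝ (Fin d) → ℝ) : Prop :=
  ContDiffOn ℝ (⊤ : ℕ∞) f {(0 : EuclideanSpace ℝ (Fin d))}ᶜ

section calcSec
variable {d : ℕ}

theorem eucLap_eq (f : EuclideanSpace ℝ (Fin d) → ℝ) (x) : eucLap f x = ∑ i, pd i (pd i f) x := rfl

theorem Sm.contDiffAt {f : EuclideanSpace ℝ (Fin d) → ℝ} (h : Sm f) {x} (hx : x ≠ 0) :
    ContDiffAt ℝ (⊤ : ℕ∞) f x :=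
  ContDiffOn.contDiffAt h (isOpen_compl_singleton.mem_nhds hx)

theorem Sm.diffAt {f : EuclideanSpace ℝ (Fin d) → ℝ} (h : Sm f) {x} (hx : x ≠ 0) :
    DifferentiableAt ℝ f x := (h.contDiffAt hx).differentiableAt (by simp)

theorem Sm.pd {f : EuclideanSpace ℝ (Fin d) → ℝ} (h : Sm f) (i : Fin d) : Sm (pd i f) := by
  have h1 : ContDiffOn ℝ (⊤ : ℕ∞) (fderiv ℝ f) {(0 : EuclideanSpace ℝ (Fin d))}ᶜ :=
    h.fderiv_of_isOpen isOpen_compl_singleton (by simp)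
  exact h1.clm_apply contDiffOn_const

theorem Sm.mul {f g : EuclideanSpace ℝ (Fin d) → ℝ} (hf : Sm f) (hg : Sm g) :
    Sm (fun x => f x * g x) := ContDiffOn.mul hf hg
theorem Sm.add {f g : EuclideanSpace ℝ (Fin d) → ℝ} (hf : Sm f) (hg : Sm g) :
    Sm (fun x => f x + g x) := ContDiffOn.add hf hg
theorem Sm.sub {f g : EuclideanSpace ℝ (Fin d) → ℝ} (hf : Sm f) (hg : Sm g) :
    Sm (fun x => f x - g x) := ContDiffOn.sub hf hg
theorem Sm.const (c : ℝ) : Sm (fun _ : EuclideanSpace ℝ (Fin d) => c) := contDiffOn_const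
theorem Sm.sum {ι : Type*} (s : Finset ι) {f : ι → EuclideanSpace ℝ (Fin d) → ℝ} (hf : ∀ i, Sm (f i)) :
    Sm (fun x => ∑ i ∈ s, f i x) := ContDiffOn.sum fun i _ => hf i
theorem Sm.congr {f g : EuclideanSpace ℝ (Fin d) → ℝ} (hf : Sm f) (h : ∀ x, x ≠ 0 → g x = f x) :
    Sm g := ContDiffOn.congr hf h
theorem Sm.eucLap {f : EuclideanSpace ℝ (Fin d) → ℝ} (h : Sm f) : Sm (eucLap f) :=
  Sm.sum _ fun i => (h.pd i).pd i

theorem pd_congr {f g : EuclideanSpace ℝ (Fin d) → ℝ} (h : ∀ x, x ≠ 0 → f x = g x) (i : Fin d)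
    {x} (hx : x ≠ 0) : pd i f x = pd i g x := by
  have : f =ᶠ[𝓝 x] g := by
    filter_upwards [isOpen_compl_singleton.mem_nhds hx] with y hy using h y hy
  rw [pd, pd, this.fderiv_eq]

theorem eucLap_congr {f g : EuclideanSpace ℝ (Fin d) → ℝ} (h : ∀ x, x ≠ 0 → f x = g x)
    {x} (hx : x ≠ 0) : eucLap f x = eucLap g x := by
  rw [eucLap_eq, eucLap_eq]
  exact Finset.sum_congr rfl fun i _ => pd_congr (fun y hy => pd_congr h i hy) i hx

theorem pd_mul {f g : EuclideanSpace ℝ (Fin d) → ℝ} (hf : Sm f) (hg : Sm g) (i : Fin d)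
    {x} (hx : x ≠ 0) : pd i (fun x => f x * g x) x = f x * pd i g x + g x * pd i f x := by
  rw [pd, fderiv_fun_mul (hf.diffAt hx) (hg.diffAt hx)]; simp [pd]

theorem pd_add {f g : EuclideanSpace ℝ (Fin d) → ℝ} (hf : Sm f) (hg : Sm g) (i : Fin d)
    {x} (hx : x ≠ 0) : pd i (fun x => f x + g x) x = pd i f x + pd i g x := by
  rw [pd, fderiv_fun_add (hf.diffAt hx) (hg.diffAt hx)]; simp [pd]

theorem pd_sub {f g : EuclideanSpace ℝ (Fin d) → ℝ} (hf : Sm f) (hg : Sm g) (i : Fin d)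
    {x} (hx : x ≠ 0) : pd i (fun x => f x - g x) x = pd i f x - pd i g x := by
  rw [pd, fderiv_fun_sub (hf.diffAt hx) (hg.diffAt hx)]; simp [pd]

theorem pd_const (c : ℝ) (i : Fin d) (x) : pd i (fun _ => c) x = 0 := by
  simp [pd]

theorem eucLap_const (c : ℝ) (x) : eucLap (fun _ : EuclideanSpace ℝ (Fin d) => c) x = 0 := by
  rw [eucLap_eq]
  refine Finset.sum_eq_zero fun i _ => ?_
  have : pd i (fun _ : EuclideanSpace ℝ (Fin d) => c) = fun _ => 0 := funext fun x => pd_const c i x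
  rw [this, pd_const]

theorem eucLap_add {f g : EuclideanSpace ℝ (Fin d) → ℝ} (hf : Sm f) (hg : Sm g)
    {x} (hx : x ≠ 0) : eucLap (fun x => f x + g x) x = eucLap f x + eucLap g x := by
  simp only [eucLap_eq, ← Finset.sum_add_distrib]
  refine Finset.sum_congr rfl fun i _ => ?_
  rw [pd_congr (fun y hy => pd_add hf hg i hy) i hx, pd_add (hf.pd i) (hg.pd i) i hx]

theorem eucLap_mul {f g : EuclideanSpace ℝ (Fin d) → ℝ} (hf : Sm f) (hg : Sm g)
    {x} (hx : x ≠ 0) : eucLap (fun x => f x * g x) x =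
      f x * eucLap g x + g x * eucLap f x + 2 * ∑ i, pd i f x * pd i g x := by
  simp only [eucLap_eq, Finset.mul_sum, ← Finset.sum_add_distrib]
  refine Finset.sum_congr rfl fun i _ => ?_
  rw [pd_congr (fun y hy => pd_mul hf hg i hy) i hx,
    pd_add (hf.mul (hg.pd i)) (hg.mul (hf.pd i)) i hx, pd_mul hf (hg.pd i) i hx,
    pd_mul hg (hf.pd i) i hx]
  ring

/-- zero-homogeneous -/
def Hom0 (f : EuclideanSpace ℝ (Fin d) → ℝ) : Prop := ∀ c : ℝ, 0 < c → ∀ x, f (c • x) = f x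

theorem fderiv_apply_eq_sum (f : EuclideanSpace ℝ (Fin d) → ℝ) (x v : EuclideanSpace ℝ (Fin d)) :
    fderiv ℝ f x v = ∑ i, v i * pd i f x := by
  have hv : v = ∑ i, v i • EuclideanSpace.single i (1:ℝ) := by
    ext j; simp [Pi.single_apply]
  conv_lhs => rw [hv]
  simp [pd]

theorem Hom0.euler {f : EuclideanSpace ℝ (Fin d) → ℝ} (h : Hom0 f) (hf : Sm f) {x} (hx : x ≠ 0) :
    ∑ i, x i * pd i f x = 0 := by
  rw [← fderiv_apply_eq_sum]
  have h1 : HasDerivAt (fun t : ℝ => t • x) x 1 := by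
    simpa using (hasDerivAt_id (1:ℝ)).smul_const x
  have h2 : HasFDerivAt f (fderiv ℝ f x) ((1:ℝ) • x) := by
    rw [one_smul]; exact (hf.diffAt hx).hasFDerivAt
  have h3 := h2.comp_hasDerivAt (1:ℝ) h1
  have h4 : (f ∘ fun t : ℝ => t • x) =ᶠ[𝓝 1] fun _ => f x := by
    filter_upwards [Ioi_mem_nhds (zero_lt_one (α := ℝ))] with t ht using h t ht x
  exact h3.unique ((hasDerivAt_const (1:ℝ) (f x)).congr_of_eventuallyEq h4)

theorem pd_scale (f : EuclideanSpace ℝ (Fin d) → ℝ) (i : Fin d) (c a : ℝ) (hc : c ≠ 0)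
    (h : ∀ x, f (c • x) = a * f x) (x) : pd i f (c • x) = c⁻¹ * a * pd i f x := by
  have h1 : (fun x => f (c • x)) = fun x => a • f x := funext h
  have h2 := fderiv_comp_smul (𝕜 := ℝ) (f := f) (x := x) c
  rw [h1] at h2
  have h3 : fderiv ℝ (fun x => a • f x) x = a • fderiv ℝ f x := by
    exact congrFun (fderiv_const_smul_field (𝕜 := ℝ) (f := f) a) x
  rw [h3] at h2
  have h4 := congrArg (fun L => L (EuclideanSpace.single i (1:ℝ))) h2
  simp only [_root_.smul_apply, smul_eq_mul] at h4
  rw [pd, pd, mul_assoc, h4]; field_simp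

theorem Hom0.eucLap_scale {f : EuclideanSpace ℝ (Fin d) → ℝ} (h : Hom0 f) {c : ℝ} (hc : 0 < c) (x) :
    eucLap f (c • x) = (c^2)⁻¹ * eucLap f x := by
  rw [eucLap_eq, eucLap_eq, Finset.mul_sum]
  refine Finset.sum_congr rfl fun i _ => ?_
  rw [pd_scale (pd i f) i c c⁻¹ hc.ne' (fun x => by
    rw [pd_scale f i c 1 hc.ne' (fun x => by rw [h c hc, one_mul])]; ring)]
  field_simp

end calcSec

section ext
variable {d : ℕ}

theorem ext0_hom (F : Metric.sphere (0 : EuclideanSpace ℝ (Fin d)) 1 → ℝ) : Hom0 (ext0 F) := by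
  intro c hc x
  by_cases hx : x = 0
  · simp [hx]
  · have : c • x ≠ 0 := smul_ne_zero hc.ne' hx
    simp only [ext0, hx, this, dite_false]
    congr 2
    rw [norm_smul, smul_smul, Real.norm_of_nonneg hc.le]
    congr 1; field_simp

theorem sph_ne (θ : Metric.sphere (0 : EuclideanSpace ℝ (Fin d)) 1) : θ.val ≠ 0 := by
  intro h
  have := θ.2
  rw [h] at this; simp at this

theorem ext0_coe (F : Metric.sphere (0 : EuclideanSpace ℝ (Fin d)) 1 → ℝ) (θ) :
    ext0 F θ.val = F θ := by
  have h1 : ‖θ.val‖ = 1 := by simp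
  simp only [ext0, sph_ne θ, dite_false]
  congr 1
  ext1
  simp [h1]

theorem ext0_smul_coe (F : Metric.sphere (0 : EuclideanSpace ℝ (Fin d)) 1 → ℝ) {r : ℝ} (hr : 0 < r) (θ) :
    ext0 F (r • θ.val) = F θ := by
  rw [ext0_hom F r hr, ext0_coe]

theorem SphSmooth.sm {F : Metric.sphere (0 : EuclideanSpace ℝ (Fin d)) 1 → ℝ} (h : SphSmooth F) :
    Sm (ext0 F) := h

theorem SphSmooth.continuous {F : Metric.sphere (0 : EuclideanSpace ℝ (Fin d)) 1 → ℝ} (h : SphSmooth F) :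
    Continuous F := by
  have := (ContDiffOn.continuousOn h).comp_continuous continuous_subtype_val (fun θ => sph_ne θ)
  convert this using 1
  ext θ; exact (ext0_coe F θ).symm

theorem SphSmooth.continuous_lap {F : Metric.sphere (0 : EuclideanSpace ℝ (Fin d)) 1 → ℝ} (h : SphSmooth F) :
    Continuous (sphLap F) :=
  (ContDiffOn.continuousOn h.sm.eucLap).comp_continuous continuous_subtype_val (fun θ => sph_ne θ)

end ext

section symm
variable {d : ℕ}

instance sphMeasure_finite (d : ℕ) : IsFiniteMeasure (sphMeasure d) := by
  unfold sphMeasure; infer_instance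

theorem polar (hd : 2 ≤ d) (F : Metric.sphere (0 : EuclideanSpace ℝ (Fin d)) 1 → ℝ) (k : ℝ → ℝ)
    (f : EuclideanSpace ℝ (Fin d) → ℝ)
    (hf : ∀ r : ℝ, 0 < r → ∀ θ : Metric.sphere (0 : EuclideanSpace ℝ (Fin d)) 1,
      f (r • θ.val) = F θ * k r) :
    ∫ x, f x = (∫ θ, F θ ∂(sphMeasure d)) *
      ∫ r : Set.Ioi (0:ℝ), k r ∂(Measure.volumeIoiPow (d - 1)) := by
  have hnt : Nontrivial (EuclideanSpace ℝ (Fin d)) := by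
    have : Nonempty (Fin d) := ⟨⟨0, by omega⟩⟩
    infer_instance
  have h0 : ∫ x, f x = ∫ x in ({(0 : EuclideanSpace ℝ (Fin d))}ᶜ : Set _), f x := by
    rw [restrict_compl_singleton]
  rw [h0, ← integral_subtype_comap (measurableSet_singleton _).compl]
  have hmp := Measure.measurePreserving_homeomorphUnitSphereProd
    (volume : Measure (EuclideanSpace ℝ (Fin d)))
  have h1 := hmp.integral_comp (Homeomorph.measurableEmbedding _)
    (fun p : Metric.sphere (0 : EuclideanSpace ℝ (Fin d)) 1 × Set.Ioi (0:ℝ) => F p.1 * k p.2)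
  have hfr : Module.finrank ℝ (EuclideanSpace ℝ (Fin d)) = d := by simp
  rw [hfr] at h1
  rw [integral_prod_mul F (fun r : Set.Ioi (0:ℝ) => k r)] at h1
  rw [sphMeasure, ← h1]
  refine integral_congr_ae (ae_of_all _ fun x => ?_)
  have hx : 0 < ‖x.val‖ := norm_pos_iff.mpr x.2
  have := hf ‖x.val‖ hx (homeomorphUnitSphereProd _ x).1
  simp only at this ⊢
  have e1 : (((homeomorphUnitSphereProd (EuclideanSpace ℝ (Fin d))) x).2 : ℝ) = ‖x.val‖ := by simp
  have e2 : ‖x.val‖ • ((homeomorphUnitSphereProd (EuclideanSpace ℝ (Fin d)) x).1).val = x.val := by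
    simp [smul_smul, hx.ne']
  rw [e1, ← this, e2]

/-- radial bump -/
def bmp : ContDiffBump (2:ℝ) := ⟨1/2, 1, by norm_num, by norm_num⟩

theorem bmp_zero {t : ℝ} (ht : t ≤ 1) : bmp t = 0 := by
  refine bmp.zero_of_le_dist ?_
  rw [Real.dist_eq, abs_sub_comm, abs_of_nonneg (by linarith)]
  change (1:ℝ) ≤ _; linarith

theorem bmp_zero' {t : ℝ} (ht : 3 ≤ t) : bmp t = 0 := by
  refine bmp.zero_of_le_dist ?_
  rw [Real.dist_eq, abs_of_nonneg (by linarith)]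
  change (1:ℝ) ≤ _; linarith

def rb (x : EuclideanSpace ℝ (Fin d)) : ℝ := bmp (‖x‖^2)

theorem rb_contDiff : ContDiff ℝ (⊤ : ℕ∞) (rb (d := d)) := bmp.contDiff.comp (contDiff_norm_sq ℝ)

theorem rb_sm : Sm (rb (d := d)) := rb_contDiff.contDiffOn

theorem rb_near (x : EuclideanSpace ℝ (Fin d)) (hx : ‖x‖ ≤ 1) : rb x = 0 :=
  bmp_zero (by nlinarith [norm_nonneg x])

theorem rb_far (x : EuclideanSpace ℝ (Fin d)) (hx : 2 ≤ ‖x‖) : rb x = 0 :=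
  bmp_zero' (by nlinarith [norm_nonneg x])

theorem pd_rb (i : Fin d) (x : EuclideanSpace ℝ (Fin d)) : pd i rb x = 2 * deriv bmp (‖x‖^2) * x i := by
  have h1 : HasDerivAt bmp (deriv bmp (‖x‖^2)) (‖x‖^2) :=
    ((bmp.contDiff (n := 1)).differentiable (by simp) _).hasDerivAt
  have h2 : HasFDerivAt (fun x : EuclideanSpace ℝ (Fin d) => ‖x‖^2) (2 • innerSL ℝ x) x :=
    (hasStrictFDerivAt_norm_sq x).hasFDerivAt
  have h3 : HasFDerivAt (rb (d := d)) _ x := h1.comp_hasFDerivAt x h2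
  rw [pd, h3.fderiv]
  simp [EuclideanSpace.inner_single_right]
  ring

theorem rb_compact {g : EuclideanSpace ℝ (Fin d) → ℝ} :
    HasCompactSupport (fun x => rb x * g x) := by
  refine HasCompactSupport.intro (isCompact_closedBall (0 : EuclideanSpace ℝ (Fin d)) 2) fun x hx => ?_
  simp at hx
  simp [rb_far x hx.le]

theorem rb_mul_contDiff {g : EuclideanSpace ℝ (Fin d) → ℝ} (hg : Sm g) :
    ContDiff ℝ (⊤ : ℕ∞) (fun x => rb x * g x) := by
  rw [contDiff_iff_contDiffAt]
  intro x
  by_cases hx : x = 0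
  · have : (fun x => rb x * g x) =ᶠ[𝓝 x] fun _ => 0 := by
      filter_upwards [Metric.ball_mem_nhds x (zero_lt_one)] with y hy
      rw [rb_near y (by rw [hx] at hy; simpa using le_of_lt (by simpa using hy)), zero_mul]
    exact contDiffAt_const.congr_of_eventuallyEq this
  · exact (rb_sm.mul hg).contDiffAt hx

theorem integral_pd_zero {g : EuclideanSpace ℝ (Fin d) → ℝ} (hg : ContDiff ℝ (⊤ : ℕ∞) g)
    (hc : HasCompactSupport g) (i : Fin d) : Integrable (pd i g) ∧ ∫ x, pd i g x = 0 := by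
  have hcont : Continuous (pd i g) :=
    (hg.continuous_fderiv (by simp)).clm_apply continuous_const
  have hcs : HasCompactSupport (pd i g) := hc.fderiv_apply (𝕜 := ℝ) _
  have hi := hcont.integrable_of_hasCompactSupport (μ := volume) hcs
  refine ⟨hi, ?_⟩
  have := integral_mul_fderiv_eq_neg_fderiv_mul_of_integrable (μ := (volume : Measure (EuclideanSpace ℝ (Fin d))))
    (f := fun _ => (1:ℝ)) (g := g) (v := EuclideanSpace.single i 1)
    (by simp) (by simpa [pd] using (show Integrable (fun x => pd i g x) volume from hi))
    (by simpa using hg.continuous.integrable_of_hasCompactSupport hc)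
    (fun x _ => by simp) (fun x _ => hg.differentiable (by simp) x)
  simpa [pd] using this

theorem rb_green {A B : EuclideanSpace ℝ (Fin d) → ℝ} (hA : Sm A) (hB : Sm B) (hA0 : Hom0 A) (hB0 : Hom0 B) :
    ∫ x, rb x * (B x * eucLap A x - A x * eucLap B x) = 0 := by
  have hX : ∀ i : Fin d, Sm (fun x => B x * pd i A x - A x * pd i B x) := fun i =>
    (hB.mul (hA.pd i)).sub (hA.mul (hB.pd i))
  have h1 : ∀ x, rb x * (B x * eucLap A x - A x * eucLap B x) =
      ∑ i, pd i (fun x => rb x * (B x * pd i A x - A x * pd i B x)) x := by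
    intro x
    by_cases hx : x = 0
    · have h0 : rb x = 0 := rb_near x (by simp [hx])
      rw [h0, zero_mul]
      symm
      refine Finset.sum_eq_zero fun i _ => ?_
      have : (fun x => rb x * (B x * pd i A x - A x * pd i B x)) =ᶠ[𝓝 x] fun _ => 0 := by
        filter_upwards [Metric.ball_mem_nhds x (zero_lt_one)] with y hy
        rw [rb_near y (by rw [hx] at hy; simpa using le_of_lt (by simpa using hy)), zero_mul]
      rw [pd, this.fderiv_eq]; simp
    · have e1 := hA0.euler hA hx
      have e2 := hB0.euler hB hx
      have : ∀ i, pd i (fun x => rb x * (B x * pd i A x - A x * pd i B x)) x =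
          rb x * (B x * pd i (pd i A) x - A x * pd i (pd i B) x)
          + 2 * deriv bmp (‖x‖^2) * B x * (x i * pd i A x)
          - 2 * deriv bmp (‖x‖^2) * A x * (x i * pd i B x) := by
        intro i
        rw [pd_mul rb_sm (hX i) i hx, pd_sub (hB.mul (hA.pd i)) (hA.mul (hB.pd i)) i hx,
          pd_mul hB (hA.pd i) i hx, pd_mul hA (hB.pd i) i hx, pd_rb]
        ring
      rw [Finset.sum_congr rfl fun i _ => this i, Finset.sum_sub_distrib, Finset.sum_add_distrib,
        ← Finset.mul_sum, ← Finset.mul_sum, ← Finset.mul_sum, e1, e2, Finset.sum_sub_distrib,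
        ← Finset.mul_sum, ← Finset.mul_sum, eucLap_eq, eucLap_eq]
      ring
  simp_rw [h1]
  rw [integral_finsetSum]
  · exact Finset.sum_eq_zero fun i _ => (integral_pd_zero (rb_mul_contDiff (hX i)) rb_compact i).2
  · exact fun i _ => (integral_pd_zero (rb_mul_contDiff (hX i)) rb_compact i).1

theorem sph_symm0 (hd : 2 ≤ d) {a b : Metric.sphere (0 : EuclideanSpace ℝ (Fin d)) 1 → ℝ}
    (ha : SphSmooth a) (hb : SphSmooth b) :
    ∫ θ, (b θ * sphLap a θ - a θ * sphLap b θ) ∂(sphMeasure d) = 0 := by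
  have h1 := rb_green ha.sm hb.sm (ext0_hom a) (ext0_hom b)
  rw [polar hd (fun θ => b θ * sphLap a θ - a θ * sphLap b θ) (fun r => bmp (r^2) * (r^2)⁻¹)] at h1
  · rcases mul_eq_zero.mp h1 with h | h
    · exact h
    · exfalso
      have hs : Sm (fun x : EuclideanSpace ℝ (Fin d) => (‖x‖^2)⁻¹) :=
        ContDiffOn.inv (contDiff_norm_sq ℝ).contDiffOn (fun x hx => by simpa using hx)
      have h2 := polar hd (fun _ => 1) (fun r => bmp (r^2) * (r^2)⁻¹)
        (fun x : EuclideanSpace ℝ (Fin d) => rb x * (‖x‖^2)⁻¹) (fun r hr θ => by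
          have : ‖r • θ.val‖ = r := by rw [norm_smul]; simp [abs_of_pos hr]
          simp only [rb, this, one_mul])
      rw [h, mul_zero] at h2
      have hne : ∃ x : EuclideanSpace ℝ (Fin d), rb x * (‖x‖^2)⁻¹ ≠ 0 := by
        refine ⟨EuclideanSpace.single ⟨0, by omega⟩ (√2), ?_⟩
        have : ‖(EuclideanSpace.single ⟨0, by omega⟩ (√2) : EuclideanSpace ℝ (Fin d))‖^2 = 2 := by
          simp
        rw [rb, this, bmp.one_of_mem_closedBall (Metric.mem_closedBall_self (by change (0:ℝ) ≤ 1/2; norm_num))]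
        norm_num
      obtain ⟨x, hx⟩ := hne
      have := (rb_mul_contDiff hs).continuous.integral_pos_of_hasCompactSupport_nonneg_nonzero
        (μ := volume) rb_compact (fun x => mul_nonneg bmp.nonneg (by positivity)) hx
      exact this.ne' h2
  · intro r hr θ
    have : ‖r • θ.val‖ = r := by rw [norm_smul]; simp [abs_of_pos hr]
    rw [ext0_smul_coe _ hr, ext0_smul_coe _ hr, (ext0_hom a).eucLap_scale hr, (ext0_hom b).eucLap_scale hr]
    simp only [rb, this, sphLap]
    ring

theorem sph_int {f : Metric.sphere (0 : EuclideanSpace ℝ (Fin d)) 1 → ℝ} (hf : Continuous f) :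
    Integrable f (sphMeasure d) :=
  hf.integrable_of_hasCompactSupport (HasCompactSupport.of_compactSpace f)

theorem sph_symm (hd : 2 ≤ d) {a b : Metric.sphere (0 : EuclideanSpace ℝ (Fin d)) 1 → ℝ}
    (ha : SphSmooth a) (hb : SphSmooth b) :
    ∫ θ, sphLap a θ * b θ ∂(sphMeasure d) = ∫ θ, a θ * sphLap b θ ∂(sphMeasure d) := by
  have := sph_symm0 hd ha hb
  have h1 := integral_sub (sph_int (hb.continuous.mul ha.continuous_lap))
    (sph_int (ha.continuous.mul hb.continuous_lap))
  simp only [Pi.mul_apply] at h1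
  rw [h1] at this
  rw [← sub_eq_zero, ← this]
  simp_rw [mul_comm (b _)]

end symm

section coords
variable {d : ℕ}

/-- inverse norm -/
def rin (x : EuclideanSpace ℝ (Fin d)) : ℝ := ‖x‖⁻¹

theorem rin_sm : Sm (rin (d := d)) := fun x hx =>
  ((contDiffAt_norm ℝ hx).inv (by simpa using hx)).contDiffWithinAt

theorem nsq_sm : Sm (fun x : EuclideanSpace ℝ (Fin d) => ‖x‖^2) := (contDiff_norm_sq ℝ).contDiffOn

theorem co_sm (i : Fin d) : Sm (fun x : EuclideanSpace ℝ (Fin d) => x i) :=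
  (EuclideanSpace.proj (𝕜 := ℝ) i).contDiff.contDiffOn

theorem pd_co (i j : Fin d) (x : EuclideanSpace ℝ (Fin d)) :
    pd j (fun x : EuclideanSpace ℝ (Fin d) => x i) x = if i = j then 1 else 0 := by
  have : HasFDerivAt (fun x : EuclideanSpace ℝ (Fin d) => x i) (EuclideanSpace.proj (𝕜 := ℝ) i) x :=
    (EuclideanSpace.proj (𝕜 := ℝ) i).hasFDerivAt
  rw [pd, this.fderiv]; simp [Pi.single_apply]

theorem pd_nsq (j : Fin d) (x : EuclideanSpace ℝ (Fin d)) :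
    pd j (fun x : EuclideanSpace ℝ (Fin d) => ‖x‖^2) x = 2 * x j := by
  rw [pd, fderiv_norm_sq_apply]; simp [EuclideanSpace.inner_single_right]

theorem pd_rin (j : Fin d) {x : EuclideanSpace ℝ (Fin d)} (hx : x ≠ 0) :
    pd j rin x = - x j * rin x ^ 3 := by
  have h1 : ∀ y : EuclideanSpace ℝ (Fin d), y ≠ 0 → (rin y * rin y) * ‖y‖^2 = 1 := by
    intro y hy
    have : ‖y‖ ≠ 0 := by simpa using hy
    rw [rin]; field_simp
  have h2 := pd_congr h1 j hx
  rw [pd_const, pd_mul (rin_sm.mul rin_sm) nsq_sm j hx, pd_mul rin_sm rin_sm j hx, pd_nsq] at h2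
  have h3 := h1 x hx
  have h4 : rin x ≠ 0 := by rw [rin]; simpa using hx
  have : rin x * pd j rin x * ‖x‖^2 = - (rin x)^2 * x j := by linarith
  have h5 : pd j rin x * ‖x‖^2 = - rin x * x j := by
    apply mul_left_cancel₀ h4; linarith
  calc pd j rin x = pd j rin x * (rin x * rin x * ‖x‖^2) := by rw [h3, mul_one]
    _ = rin x ^2 * (pd j rin x * ‖x‖^2) := by ring
    _ = _ := by rw [h5]; ring

/-- coordinate function on the sphere -/
def cu (i : Fin d) : Metric.sphere (0 : EuclideanSpace ℝ (Fin d)) 1 → ℝ := fun θ => θ.val i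

theorem ext0_cu (i : Fin d) (x : EuclideanSpace ℝ (Fin d)) (hx : x ≠ 0) :
    ext0 (cu i) x = x i * rin x := by
  simp [ext0, hx, cu, rin, mul_comm]

theorem cu_smooth (i : Fin d) : SphSmooth (cu i) :=
  Sm.congr ((co_sm i).mul rin_sm) (ext0_cu i)

theorem pd_ext0_cu (i j : Fin d) (x : EuclideanSpace ℝ (Fin d)) (hx : x ≠ 0) :
    pd j (ext0 (cu i)) x = (if i = j then 1 else 0) * rin x - x i * x j * (rin x * (rin x * rin x)) := by
  rw [pd_congr (ext0_cu i) j hx, pd_mul (co_sm i) rin_sm j hx, pd_co, pd_rin j hx]; ring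

theorem rin_coe (θ : Metric.sphere (0 : EuclideanSpace ℝ (Fin d)) 1) : rin θ.val = 1 := by
  simp [rin]

theorem sum_sq_coe (θ : Metric.sphere (0 : EuclideanSpace ℝ (Fin d)) 1) : ∑ i, θ.val i * θ.val i = 1 := by
  have : ‖θ.val‖^2 = 1 := by simp
  rw [EuclideanSpace.norm_sq_eq] at this
  refine Eq.trans (Finset.sum_congr rfl fun i _ => by simp [sq]) this

theorem sphLap_cu (i : Fin d) (θ) : sphLap (cu i) θ = -((d:ℝ) - 1) * cu i θ := by
  have hx := sph_ne θ
  rw [sphLap, eucLap_eq]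
  have h3 := rin_sm.mul (rin_sm.mul (rin_sm (d := d)))
  have : ∀ j, pd j (pd j (ext0 (cu i))) θ.val =
      (if i = j then - 2 * θ.val i else 0) - θ.val i + 3 * θ.val i * (θ.val j * θ.val j) := by
    intro j
    rw [pd_congr (pd_ext0_cu i j) j hx,
      pd_sub ((Sm.const _).mul rin_sm) (((co_sm i).mul (co_sm j)).mul h3) j hx,
      pd_mul (Sm.const _) rin_sm j hx, pd_mul ((co_sm i).mul (co_sm j)) h3 j hx,
      pd_mul (co_sm i) (co_sm j) j hx, pd_mul rin_sm (rin_sm.mul rin_sm) j hx,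
      pd_mul rin_sm rin_sm j hx, pd_const, pd_co, pd_co, pd_rin j hx, rin_coe]
    split_ifs with h h' h'
    · subst h; ring
    · exact absurd rfl h'
    · ring
    · exact absurd rfl h'
  rw [Finset.sum_congr rfl fun j _ => this j, Finset.sum_add_distrib, Finset.sum_sub_distrib,
    ← Finset.mul_sum, sum_sq_coe]
  simp [cu]
  ring

/-- carre du champ -/
def sphG (a b : Metric.sphere (0 : EuclideanSpace ℝ (Fin d)) 1 → ℝ)
    (θ : Metric.sphere (0 : EuclideanSpace ℝ (Fin d)) 1) : ℝ :=
  ∑ k, pd k (ext0 a) θ.val * pd k (ext0 b) θ.val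

theorem sphG_cu (i j : Fin d) (θ) :
    sphG (cu i) (cu j) θ = (if i = j then 1 else 0) - cu i θ * cu j θ := by
  have hx := sph_ne θ
  have : ∀ k, pd k (ext0 (cu i)) θ.val * pd k (ext0 (cu j)) θ.val =
     (if i = k then (if j = k then 1 else 0) else 0) - (if i = k then θ.val j * θ.val k else 0)
      - (if j = k then θ.val i * θ.val k else 0) + θ.val i * θ.val j * (θ.val k * θ.val k) := by
    intro k
    rw [pd_ext0_cu i k _ hx, pd_ext0_cu j k _ hx, rin_coe]
    split_ifs <;> ring
  rw [sphG, Finset.sum_congr rfl fun j _ => this j, Finset.sum_add_distrib, Finset.sum_sub_distrib,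
    Finset.sum_sub_distrib, ← Finset.mul_sum, sum_sq_coe]
  simp [cu, eq_comm]
  ring

theorem ext0_mul (a b : Metric.sphere (0 : EuclideanSpace ℝ (Fin d)) 1 → ℝ) (x) (hx : x ≠ 0) :
    ext0 (fun θ => a θ * b θ) x = ext0 a x * ext0 b x := by simp [ext0, hx]
theorem ext0_add (a b : Metric.sphere (0 : EuclideanSpace ℝ (Fin d)) 1 → ℝ) (x) (hx : x ≠ 0) :
    ext0 (fun θ => a θ + b θ) x = ext0 a x + ext0 b x := by simp [ext0, hx]
theorem ext0_const (c : ℝ) (x : EuclideanSpace ℝ (Fin d)) (hx : x ≠ 0) :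
    ext0 (fun _ => c) x = c := by simp [ext0, hx]

variable {a b c : Metric.sphere (0 : EuclideanSpace ℝ (Fin d)) 1 → ℝ}

theorem SphSmooth.mul (ha : SphSmooth a) (hb : SphSmooth b) : SphSmooth (fun θ => a θ * b θ) :=
  Sm.congr (ha.sm.mul hb.sm) (ext0_mul a b)
theorem SphSmooth.add (ha : SphSmooth a) (hb : SphSmooth b) : SphSmooth (fun θ => a θ + b θ) :=
  Sm.congr (ha.sm.add hb.sm) (ext0_add a b)
theorem SphSmooth.const (c : ℝ) :
    SphSmooth (fun _ : Metric.sphere (0 : EuclideanSpace ℝ (Fin d)) 1 => c) :=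
  Sm.congr (Sm.const c) (ext0_const c)

theorem sphLap_const (c : ℝ) (θ) :
    sphLap (fun _ : Metric.sphere (0 : EuclideanSpace ℝ (Fin d)) 1 => c) θ = 0 := by
  rw [sphLap, eucLap_congr (ext0_const c) (sph_ne θ), eucLap_const]

theorem sphLap_add (ha : SphSmooth a) (hb : SphSmooth b) (θ) :
    sphLap (fun θ => a θ + b θ) θ = sphLap a θ + sphLap b θ := by
  rw [sphLap, eucLap_congr (ext0_add a b) (sph_ne θ), eucLap_add ha.sm hb.sm (sph_ne θ)]; rfl

theorem sphLap_mul (ha : SphSmooth a) (hb : SphSmooth b) (θ) :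
    sphLap (fun θ => a θ * b θ) θ = a θ * sphLap b θ + b θ * sphLap a θ + 2 * sphG a b θ := by
  rw [sphLap, eucLap_congr (ext0_mul a b) (sph_ne θ), eucLap_mul ha.sm hb.sm (sph_ne θ),
    ext0_coe, ext0_coe]; rfl

theorem sphG_const (r : ℝ) (θ) : sphG a (fun _ => r) θ = 0 := by
  refine Finset.sum_eq_zero fun k _ => ?_
  rw [pd_congr (ext0_const r) k (sph_ne θ), pd_const, mul_zero]

theorem sphG_mul (hb : SphSmooth b) (hc : SphSmooth c) (θ) :
    sphG a (fun θ => b θ * c θ) θ = b θ * sphG a c θ + c θ * sphG a b θ := by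
  simp only [sphG, Finset.mul_sum, ← Finset.sum_add_distrib]
  refine Finset.sum_congr rfl fun k _ => ?_
  rw [pd_congr (ext0_mul b c) k (sph_ne θ), pd_mul hb.sm hc.sm k (sph_ne θ), ext0_coe, ext0_coe]
  ring

theorem sphLap_smul (r : ℝ) (ha : SphSmooth a) (θ) :
    sphLap (fun θ => r * a θ) θ = r * sphLap a θ := by
  rw [sphLap_mul (SphSmooth.const r) ha, sphLap_const]
  have : sphG (fun _ => r) a θ = sphG a (fun _ => r) θ :=
    Finset.sum_congr rfl fun k _ => mul_comm _ _
  rw [this, sphG_const]; ring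

end coords

section poly
variable {d : ℕ}

/-- coordinate as a continuous map -/
def cuC (i : Fin d) : C(Metric.sphere (0 : EuclideanSpace ℝ (Fin d)) 1, ℝ) :=
  ⟨cu i, (cu_smooth i).continuous⟩

/-- monomials -/
def mono (l : List (Fin d)) : C(Metric.sphere (0 : EuclideanSpace ℝ (Fin d)) 1, ℝ) :=
  (l.map cuC).prod

/-- polynomials of degree `< k` -/
def W (d k : ℕ) : Submodule ℝ C(Metric.sphere (0 : EuclideanSpace ℝ (Fin d)) 1, ℝ) :=
  Submodule.span ℝ (mono '' {l : List (Fin d) | l.length < k})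

theorem mono_nil : (mono ([] : List (Fin d))) = 1 := rfl
theorem mono_cons (i : Fin d) (l) : mono (i :: l) = cuC i * mono l := by simp [mono]
theorem mono_cons_coe (i : Fin d) (l) : (mono (i :: l) : _ → ℝ) = fun θ => cu i θ * mono l θ := by
  rw [mono_cons]; rfl
theorem mono_nil_coe : ((mono ([] : List (Fin d))) : _ → ℝ) = fun _ => 1 := rfl

theorem mono_mem {k : ℕ} {l : List (Fin d)} (h : l.length < k) : mono l ∈ W d k :=
  Submodule.subset_span ⟨l, h, rfl⟩

theorem W_mono {k m : ℕ} (h : k ≤ m) : W d k ≤ W d m :=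
  Submodule.span_mono (Set.image_mono fun _ hl => lt_of_lt_of_le hl h)

theorem W_mul {k : ℕ} (i : Fin d) {p} (hp : p ∈ W d k) : cuC i * p ∈ W d (k+1) := by
  induction hp using Submodule.span_induction with
  | mem x h =>
    obtain ⟨l, hl, rfl⟩ := h
    rw [← mono_cons]
    exact mono_mem (by simpa using hl)
  | zero => simp
  | add x y _ _ hx hy => rw [mul_add]; exact Submodule.add_mem _ hx hy
  | smul a x _ hx => rw [mul_smul_comm]; exact Submodule.smul_mem _ a hx

theorem mono_smooth (l : List (Fin d)) : SphSmooth (mono l) := by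
  induction l with
  | nil => exact SphSmooth.const 1
  | cons i l ih => rw [mono_cons_coe]; exact (cu_smooth i).mul ih

theorem mono_G (i : Fin d) (l : List (Fin d)) : ∃ q ∈ W d l.length, ∀ θ,
    sphG (cu i) (mono l) θ = - (l.length : ℝ) * (cu i θ * mono l θ) + q θ := by
  induction l with
  | nil => exact ⟨0, Submodule.zero_mem _, fun θ => by rw [mono_nil_coe, sphG_const]; simp⟩
  | cons j l ih =>
    obtain ⟨q, hq, h⟩ := ih
    refine ⟨cuC j * q + (if i = j then (1:ℝ) else 0) • mono l,
      Submodule.add_mem _ (W_mul j hq) (Submodule.smul_mem _ _ (mono_mem (by simp))), fun θ => ?_⟩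
    rw [mono_cons_coe, sphG_mul (cu_smooth j) (mono_smooth l), h, sphG_cu]
    have : cuC j θ = cu j θ := rfl
    split_ifs <;> simp [this] <;> ring

/-- Eigenvalues of the spherical Laplacian. -/
def lamS (d k : ℕ) : ℝ := (k:ℝ) * ((k:ℝ) + (d:ℝ) - 2)

theorem mono_lap (l : List (Fin d)) : ∃ q ∈ W d l.length, ∀ θ,
    sphLap (mono l) θ = - lamS d l.length * mono l θ + q θ := by
  induction l with
  | nil => exact ⟨0, Submodule.zero_mem _, fun θ => by rw [mono_nil_coe, sphLap_const]; simp [lamS]⟩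
  | cons i l ih =>
    obtain ⟨q, hq, h⟩ := ih
    obtain ⟨p, hp, hG⟩ := mono_G i l
    refine ⟨cuC i * q + (2:ℝ) • p,
      Submodule.add_mem _ (W_mul i hq) (Submodule.smul_mem _ _ (W_mono (by simp) hp)), fun θ => ?_⟩
    rw [mono_cons_coe, sphLap_mul (cu_smooth i) (mono_smooth l), h, hG, sphLap_cu]
    have : cuC i θ = cu i θ := rfl
    simp [this, lamS]
    ring

theorem W_lap (m : ℕ) (p) (hp : p ∈ W d (m+1)) : SphSmooth p ∧ ∃ q ∈ W d m, ∀ θ,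
    sphLap p θ = - lamS d m * p θ + q θ := by
  induction hp using Submodule.span_induction with
  | mem x h =>
    obtain ⟨l, hl, rfl⟩ := h
    refine ⟨mono_smooth l, ?_⟩
    obtain ⟨q, hq, h⟩ := mono_lap l
    rcases Nat.lt_succ_iff_lt_or_eq.mp hl with h' | h'
    · refine ⟨q + (lamS d m - lamS d l.length) • mono l, Submodule.add_mem _ (W_mono h'.le hq)
        (Submodule.smul_mem _ _ (mono_mem h')), fun θ => ?_⟩
      rw [h]; simp; ring
    · subst h'; exact ⟨q, hq, h⟩
  | zero => exact ⟨SphSmooth.const 0, 0, Submodule.zero_mem _, fun θ => by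
      have := sphLap_const (d := d) 0 θ
      exact this.trans (by simp)⟩
  | add x y _ _ hx hy =>
    obtain ⟨sx, q, hq, h⟩ := hx
    obtain ⟨sy, r, hr, h2⟩ := hy
    refine ⟨sx.add sy, q + r, Submodule.add_mem _ hq hr, fun θ => ?_⟩
    have := sphLap_add sx sy θ
    rw [h, h2] at this
    refine Eq.trans this ?_
    simp; ring
  | smul a x _ hx =>
    obtain ⟨sx, q, hq, h⟩ := hx
    refine ⟨(SphSmooth.const a).mul sx, a • q, Submodule.smul_mem _ _ hq, fun θ => ?_⟩
    have := sphLap_smul a sx θ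
    rw [h] at this
    refine Eq.trans this ?_
    simp; ring

instance W_fin (k : ℕ) : FiniteDimensional ℝ (W d k) :=
  FiniteDimensional.span_of_finite ℝ ((List.finite_length_lt (Fin d) k).image _)

theorem W_dense : (⨆ k, W d k).topologicalClosure = ⊤ := by
  let A : Subalgebra ℝ C(Metric.sphere (0 : EuclideanSpace ℝ (Fin d)) 1, ℝ) :=
    Algebra.adjoin ℝ (Set.range cuC)
  have hsep : A.SeparatesPoints := by
    intro x y hxy
    by_contra hcon
    push Not at hcon
    apply hxy
    ext i
    exact hcon (cu i) ⟨cuC i, Algebra.subset_adjoin ⟨i, rfl⟩, rfl⟩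
  have htop := ContinuousMap.subalgebra_topologicalClosure_eq_top_of_separatesPoints A hsep
  have hle : Subalgebra.toSubmodule A ≤ ⨆ k, W d k := by
    rw [Algebra.adjoin_eq_span, Submodule.span_le]
    intro x hx
    obtain ⟨l, hl, rfl⟩ := Submonoid.exists_list_of_mem_closure hx
    have : ∃ l' : List (Fin d), l'.map cuC = l := by
      have : l ∈ Set.range (List.map (cuC (d := d))) := by
        rw [Set.range_list_map]; exact hl
      exact this
    obtain ⟨l', rfl⟩ := this
    exact (le_iSup (W d) (l'.length + 1)) (mono_mem (Nat.lt_succ_self _))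
  rw [eq_top_iff]
  intro f _
  have hf : f ∈ A.topologicalClosure := by rw [htop]; trivial
  exact closure_mono hle hf

abbrev L2S (d : ℕ) := Lp ℝ 2 (sphMeasure d)

/-- embedding into L2 -/
def tol (d : ℕ) : C(Metric.sphere (0 : EuclideanSpace ℝ (Fin d)) 1, ℝ) →L[ℝ] L2S d :=
  ContinuousMap.toLp 2 (sphMeasure d) ℝ

theorem tol_inner (f g : C(Metric.sphere (0 : EuclideanSpace ℝ (Fin d)) 1, ℝ)) :
    ⟪tol d f, tol d g⟫ = ∫ θ, f θ * g θ ∂(sphMeasure d) := by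
  rw [tol, ContinuousMap.inner_toLp]
  simp [mul_comm]

/-- image in L2 -/
def VV (d m : ℕ) : Submodule ℝ (L2S d) := (W d (m+1)).map (tol d).toLinearMap

instance VV_fin (m : ℕ) : FiniteDimensional ℝ (VV d m) := by
  unfold VV; infer_instance

theorem VV_dense : ⊤ ≤ (⨆ m, VV d m).topologicalClosure := by
  have h1 : ∀ f, tol d f ∈ (⨆ m, VV d m).topologicalClosure := by
    intro f
    have hf : f ∈ closure ((⨆ k, W d k : Submodule ℝ _) : Set _) := by
      have : f ∈ (⨆ k, W d k).topologicalClosure := by rw [W_dense]; trivial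
      exact this
    have hmap : ∀ g ∈ (⨆ k, W d k), tol d g ∈ (⨆ m, VV d m) := by
      intro g hg
      have : (⨆ k, W d k) ≤ (⨆ m, VV d m).comap (tol d).toLinearMap := by
        refine iSup_le fun k g hg => ?_
        exact (le_iSup (VV d) k) ⟨g, W_mono (Nat.le_succ k) hg, rfl⟩
      exact this hg
    exact map_mem_closure (tol d).continuous hf hmap
  intro x _
  have hr : DenseRange (tol d) := ContinuousMap.toLp_denseRange ℝ (sphMeasure d) ℝ (by simp)
  have : closure (Set.range (tol d)) ⊆ ((⨆ m, VV d m).topologicalClosure : Set _) :=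
    closure_minimal (by rintro _ ⟨f, rfl⟩; exact h1 f) (Submodule.isClosed_topologicalClosure _)
  exact this (hr x)

/-- Spectral gap inequality. -/
theorem sph_gap (hd : 2 ≤ d) {g : Metric.sphere (0 : EuclideanSpace ℝ (Fin d)) 1 → ℝ} (hg : SphSmooth g)
    (h1 : ∫ θ, g θ ∂(sphMeasure d) = 0) (hu : ∀ i, ∫ θ, g θ * cu i θ ∂(sphMeasure d) = 0) :
    0 ≤ ∫ θ, (sphLap g θ + 2 * d * g θ) * (sphLap g θ + 3 * (d + 1) * g θ) ∂(sphMeasure d) := by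
  let a : C(Metric.sphere (0 : EuclideanSpace ℝ (Fin d)) 1, ℝ) := ⟨g, hg.continuous⟩
  let b : C(Metric.sphere (0 : EuclideanSpace ℝ (Fin d)) 1, ℝ) := ⟨sphLap g, hg.continuous_lap⟩
  have key := abstract_gap (H := L2S d)
    (fun x x' => ∃ a b : C(Metric.sphere (0 : EuclideanSpace ℝ (Fin d)) 1, ℝ),
      SphSmooth a ∧ (∀ θ, b θ = sphLap a θ) ∧ x = tol d a ∧ x' = tol d b)
    (VV d) (fun m k h => Submodule.map_mono (W_mono (by omega))) VV_dense (lamS d)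
    ?_ ?_ ?_ (2 * d) (3 * (d + 1)) ?_ (tol d a) (tol d b) ⟨a, b, hg, fun _ => rfl, rfl, rfl⟩ ?_
  · rw [← map_smul, ← map_smul, ← map_add, ← map_add, tol_inner] at key
    exact key
  · rintro _ _ _ _ ⟨a, a', ha, ha', rfl, rfl⟩ ⟨b, b', hb, hb', rfl, rfl⟩
    rw [tol_inner, tol_inner]
    simp_rw [ha', hb']
    exact sph_symm hd ha hb
  · rintro _ ⟨p, hp, rfl⟩
    obtain ⟨sp, q, hq, h⟩ := W_lap 0 p hp
    exact ⟨_, ⟨-lamS d 0 • p + q, Submodule.add_mem _ (Submodule.smul_mem _ _ hp)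
      (W_mono (Nat.zero_le _) hq), rfl⟩, p, -lamS d 0 • p + q, sp, fun θ => by rw [h]; simp, rfl, rfl⟩
  · rintro m _ ⟨p, hp, rfl⟩
    obtain ⟨sp, q, hq, h⟩ := W_lap (m+1) p hp
    exact ⟨_, ⟨q, hq, rfl⟩, p, -lamS d (m+1) • p + q, sp, fun θ => by rw [h]; simp, rfl, by simp⟩
  · intro m hm
    have hd' : (2:ℝ) ≤ d := by exact_mod_cast hd
    rcases Nat.lt_or_ge m 2 with h | h
    · have : m = 1 := by omega
      subst this
      simp only [lamS]; push_cast
      apply le_of_eq; ring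
    · have hm' : (2:ℝ) ≤ m := by exact_mod_cast h
      simp only [lamS]; push_cast
      apply mul_nonneg_of_nonpos_of_nonpos <;> nlinarith
  · rintro _ ⟨p, hp, rfl⟩
    change ⟪tol d a, tol d p⟫ = 0
    induction hp using Submodule.span_induction with
    | mem x h =>
      obtain ⟨l, hl, rfl⟩ := h
      rw [tol_inner]
      match l, hl with
      | [], _ =>
        rw [mono_nil]
        simp only [ContinuousMap.one_apply, mul_one]
        exact h1
      | [i], _ => rw [mono_cons, mono_nil, mul_one]; exact hu i
      | _ :: _ :: _, hl => simp at hl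
    | zero => simp
    | add x y _ _ hx hy => rw [map_add, inner_add_right, hx, hy, add_zero]
    | smul a x _ hx => rw [map_smul, inner_smul_right, hx, mul_zero]

end poly

section final
variable {d : ℕ}

theorem suppS_smooth (K : ConvexBody (EuclideanSpace ℝ (Fin d))) (hK : SmoothBody K) :
    SphSmooth (suppS K) := by
  have h1 : ContDiffOn ℝ (⊤ : ℕ∞) (fun x : EuclideanSpace ℝ (Fin d) => rin x • x) {0}ᶜ :=
    ContDiffOn.smul rin_sm contDiffOn_id
  have h2 := hK.2.comp h1 (fun x hx => by
    have : x ≠ 0 := hx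
    simp [rin, this])
  refine ContDiffOn.congr h2 fun x hx => ?_
  have : x ≠ 0 := hx
  simp [ext0, this, suppS, rin]

theorem area_eq (d : ℕ) : sphArea d = d * (volume (Metric.ball (0 : EuclideanSpace ℝ (Fin d)) 1)).toReal := by
  rw [sphArea, sphMeasure, Measure.toSphere_apply_univ]; simp

theorem ball_pos (d : ℕ) : 0 < (volume (Metric.ball (0 : EuclideanSpace ℝ (Fin d)) 1)).toReal :=
  ENNReal.toReal_pos (Metric.measure_ball_pos _ _ one_pos).ne' measure_ball_lt_top.ne

theorem int_const (c : ℝ) : ∫ _, c ∂(sphMeasure d) = c * sphArea d := by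
  rw [integral_const, sphArea, smul_eq_mul, mul_comm]; rfl

theorem int_lap (hd : 2 ≤ d) {a : Metric.sphere (0 : EuclideanSpace ℝ (Fin d)) 1 → ℝ} (ha : SphSmooth a) :
    ∫ θ, sphLap a θ ∂(sphMeasure d) = 0 := by
  have := sph_symm hd ha (SphSmooth.const 1)
  simpa [sphLap_const] using this

theorem int_cu (hd : 2 ≤ d) (i : Fin d) : ∫ θ, cu i θ ∂(sphMeasure d) = 0 := by
  have h := int_lap hd (cu_smooth i)
  simp_rw [sphLap_cu] at h
  rw [integral_const_mul] at h
  have hd' : (2:ℝ) ≤ d := by exact_mod_cast hd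
  rcases mul_eq_zero.mp h with h | h
  · linarith
  · exact h

theorem int_cu_cu (hd : 2 ≤ d) (i j : Fin d) : ∫ θ, cu i θ * cu j θ ∂(sphMeasure d) =
    if i = j then (volume (Metric.ball (0 : EuclideanSpace ℝ (Fin d)) 1)).toReal else 0 := by
  have h := int_lap hd ((cu_smooth i).mul (cu_smooth j))
  have h2 : ∀ θ, sphLap (fun θ => cu i θ * cu j θ) θ =
      (-2 * (d:ℝ)) * (cu i θ * cu j θ) + 2 * (if i = j then 1 else 0) := by
    intro θ
    rw [sphLap_mul (cu_smooth i) (cu_smooth j), sphLap_cu, sphLap_cu, sphG_cu]; ring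
  simp_rw [h2] at h
  rw [integral_add ((sph_int ((cu_smooth i).mul (cu_smooth j)).continuous).const_mul _)
    (integrable_const _), integral_const_mul, int_const, area_eq] at h
  have hd' : (2:ℝ) ≤ d := by exact_mod_cast hd
  have hd0 : (d:ℝ) ≠ 0 := by linarith
  split_ifs at h ⊢
  · apply mul_left_cancel₀ hd0; linarith
  · apply mul_left_cancel₀ hd0; linarith

/-- The linear function `θ ↦ z·θ`. -/
def lin (z : EuclideanSpace ℝ (Fin d)) : Metric.sphere (0 : EuclideanSpace ℝ (Fin d)) 1 → ℝ :=
  fun θ => ∑ i, z i * cu i θ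

theorem lin_eq (z : EuclideanSpace ℝ (Fin d)) (θ : Metric.sphere (0 : EuclideanSpace ℝ (Fin d)) 1) :
    ⟪z, θ.val⟫ = lin z θ := by
  simp [lin, cu, PiLp.inner_apply, mul_comm]

theorem lin_smooth_lap (z : EuclideanSpace ℝ (Fin d)) (s : Finset (Fin d)) :
    SphSmooth (fun θ => ∑ i ∈ s, z i * cu i θ) ∧
    ∀ θ, sphLap (fun θ => ∑ i ∈ s, z i * cu i θ) θ = -((d:ℝ) - 1) * ∑ i ∈ s, z i * cu i θ := by
  induction s using Finset.induction_on with
  | empty => simpa [sphLap_const] using SphSmooth.const 0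
  | insert a s ha ih =>
    simp only [Finset.sum_insert ha]
    have h1 := (SphSmooth.const (z a)).mul (cu_smooth a)
    refine ⟨h1.add ih.1, fun θ => ?_⟩
    rw [sphLap_add h1 ih.1, ih.2, sphLap_smul _ (cu_smooth a), sphLap_cu]; ring

theorem int_mul_lin {a : Metric.sphere (0 : EuclideanSpace ℝ (Fin d)) 1 → ℝ} (ha : Continuous a)
    (z : EuclideanSpace ℝ (Fin d)) :
    ∫ θ, a θ * lin z θ ∂(sphMeasure d) = ∑ i, z i * ∫ θ, a θ * cu i θ ∂(sphMeasure d) := by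
  have : ∀ θ, a θ * lin z θ = ∑ i, z i * (a θ * cu i θ) := fun θ => by
    rw [lin, Finset.mul_sum]; exact Finset.sum_congr rfl fun i _ => by ring
  simp_rw [this]
  rw [integral_finsetSum _ fun i _ => (show Integrable (fun θ => z i * (a θ * cu i θ)) (sphMeasure d) from
    (sph_int (ha.mul (cu_smooth i).continuous)).const_mul _)]
  simp_rw [integral_const_mul]

theorem main_aux (hd : 2 ≤ d) (K : ConvexBody (EuclideanSpace ℝ (Fin d))) (hK : SmoothBody K) :
    (((d : ℝ) - 1) / ((d : ℝ) + 1)) *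
        (intH2sq K - (1 / sphArea d) * (intH2 K) ^ 2) -
      ((1 / sphArea d) * (intH2 K) ^ 2 - intH3 K) ≥
    (2 * ((d : ℝ) + 2) / ((d : ℝ) + 1)) *
      ((1 / sphArea d) * (intH2 K) ^ 2 - intH3 K -
        (((d : ℝ) + 1) / ((d : ℝ) - 1)) * delta2SqSteiner K) := by
  have hd' : (2:ℝ) ≤ d := by exact_mod_cast hd
  have hB := ball_pos d
  have hSp : 0 < sphArea d := by rw [area_eq]; positivity
  have hh := suppS_smooth K hK
  set z := steinerPt K with hz
  obtain ⟨hl, hlap⟩ := lin_smooth_lap z Finset.univ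
  change SphSmooth (lin z) at hl
  change ∀ θ, sphLap (lin z) θ = -((d:ℝ) - 1) * lin z θ at hlap
  set c := meanWidth K / 2 with hc
  -- g = h - c - lin
  let g : Metric.sphere (0 : EuclideanSpace ℝ (Fin d)) 1 → ℝ := fun θ => suppS K θ + (-c + (-1) * lin z θ)
  have hm := (SphSmooth.const (d := d) (-1)).mul hl
  have hg : SphSmooth g := hh.add ((SphSmooth.const (-c)).add hm)
  have hgL : ∀ θ, sphLap g θ = sphLap (suppS K) θ + ((d:ℝ) - 1) * lin z θ := by
    intro θ
    change sphLap (fun θ => suppS K θ + (-c + (-1) * lin z θ)) θ = _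
    rw [sphLap_add hh ((SphSmooth.const (-c)).add hm), sphLap_add (SphSmooth.const (-c)) hm,
      sphLap_const, sphLap_smul _ hl, hlap]; ring
  have hcS : c * sphArea d = intH2 K := by
    rw [hc, meanWidth, intH2]; field_simp
  have hlin0 : ∫ θ, lin z θ ∂(sphMeasure d) = 0 := by
    have := int_mul_lin (a := fun _ => 1) continuous_const z
    simpa [int_cu hd] using this
  have hzi : ∀ i, z i * (volume (Metric.ball (0 : EuclideanSpace ℝ (Fin d)) 1)).toReal =
      ∫ θ, suppS K θ * cu i θ ∂(sphMeasure d) := by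
    intro i
    rw [hz, steinerPt]
    have hIntg : Integrable (fun θ : Metric.sphere (0 : EuclideanSpace ℝ (Fin d)) 1 =>
        suppS K θ • (θ : EuclideanSpace ℝ (Fin d))) (sphMeasure d) :=
      (hh.continuous.smul continuous_subtype_val).integrable_of_hasCompactSupport
        (HasCompactSupport.of_compactSpace _)
    have := (EuclideanSpace.proj (𝕜 := ℝ) i).integral_comp_comm hIntg
    have e : (∫ θ, suppS K θ • (θ : EuclideanSpace ℝ (Fin d)) ∂(sphMeasure d)) i =
        ∫ θ, suppS K θ * cu i θ ∂(sphMeasure d) := this.symm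
    rw [PiLp.smul_apply, smul_eq_mul, e]
    field_simp
  have hg1 : ∫ θ, g θ ∂(sphMeasure d) = 0 := by
    have e : ∫ θ, g θ ∂(sphMeasure d) = ∫ θ, suppS K θ ∂(sphMeasure d) +
        (∫ _, -c ∂(sphMeasure d) + ∫ θ, (-1) * lin z θ ∂(sphMeasure d)) := by
      rw [← integral_add (integrable_const _) (sph_int hm.continuous),
        ← integral_add (sph_int hh.continuous) (sph_int ((SphSmooth.const (-c)).add hm).continuous)]
    rw [e, int_const, integral_const_mul, hlin0]
    have := hcS; rw [intH2] at this; linarith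
  have hgu : ∀ i, ∫ θ, g θ * cu i θ ∂(sphMeasure d) = 0 := by
    intro i
    have e : ∀ θ, g θ * cu i θ = suppS K θ * cu i θ + ((-c) * cu i θ + (-1) * (cu i θ * lin z θ)) := by
      intro θ; simp only [g]; ring
    simp_rw [e]
    have i1 := sph_int (hh.mul (cu_smooth i)).continuous
    have i2 := (sph_int (cu_smooth i).continuous).const_mul (-c)
    have i3 := (sph_int ((cu_smooth i).mul hl).continuous).const_mul (-1)
    have i4 : Integrable (fun θ => (-c) * cu i θ + (-1) * (cu i θ * lin z θ)) (sphMeasure d) := i2.add i3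
    rw [integral_add i1 i4, integral_add i2 i3, integral_const_mul, integral_const_mul,
      int_cu hd, int_mul_lin (cu_smooth i).continuous, ← hzi]
    simp [int_cu_cu hd]
  have hgl : ∫ θ, g θ * lin z θ ∂(sphMeasure d) = 0 := by
    rw [int_mul_lin hg.continuous]; simp [hgu]
  have hGl : ∫ θ, sphLap g θ * lin z θ ∂(sphMeasure d) = 0 := by
    rw [sph_symm hd hg hl]
    have : ∀ θ, g θ * sphLap (lin z) θ = -((d:ℝ)-1) * (g θ * lin z θ) := fun θ => by rw [hlap]; ring
    simp_rw [this]
    rw [integral_const_mul, hgl, mul_zero]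
  have hG1 := int_lap hd hg
  have hgap := sph_gap hd hg hg1 hgu
  -- integrability
  have cg := hg.continuous
  have cG := hg.continuous_lap
  have cl := hl.continuous
  set N := ∫ θ, g θ * g θ ∂(sphMeasure d) with hN
  set M := ∫ θ, g θ * sphLap g θ ∂(sphMeasure d) with hM
  set Q := ∫ θ, sphLap g θ * sphLap g θ ∂(sphMeasure d) with hQ
  -- a general expansion formula
  have expand : ∀ p q r s t u v w : ℝ, ∫ θ, (p * (g θ * g θ) + q * (g θ * sphLap g θ) + r * (sphLap g θ * sphLap g θ)
      + s * g θ + t * sphLap g θ + u * lin z θ + v * (g θ * lin z θ) + w * (sphLap g θ * lin z θ)) ∂(sphMeasure d)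
      = p * N + q * M + r * Q := by
    intro p q r s t u v w
    rw [integral_add, integral_add, integral_add, integral_add, integral_add, integral_add,
      integral_add]
    rotate_left
    all_goals try exact sph_int (by fun_prop)
    simp only [integral_const_mul, hg1, hG1, hlin0, hgl, hGl, ← hN, ← hM, ← hQ]
    ring
  have expandc : ∀ p q r s t u v w k : ℝ, ∫ θ, ((p * (g θ * g θ) + q * (g θ * sphLap g θ) + r * (sphLap g θ * sphLap g θ)
      + s * g θ + t * sphLap g θ + u * lin z θ + v * (g θ * lin z θ) + w * (sphLap g θ * lin z θ)) + k) ∂(sphMeasure d)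
      = p * N + q * M + r * Q + k * sphArea d := by
    intro p q r s t u v w k
    rw [integral_add (sph_int (by fun_prop)) (integrable_const _), expand, int_const]
  have hn : (d:ℝ) - 1 ≠ 0 := by linarith
  have hs : ∀ θ, suppS K θ = g θ + c + lin z θ := fun θ => by simp only [g]; ring
  have hsL : ∀ θ, sphLap (suppS K) θ = sphLap g θ - ((d:ℝ)-1) * lin z θ := fun θ => by rw [hgL]; ring
  have A1 : intH2sq K = N + 2 / ((d:ℝ)-1) * M + (1/((d:ℝ)-1)^2) * Q + c^2 * sphArea d := by
    rw [intH2sq, ← one_mul N, ← expandc 1 _ _ (2*c) (2*c/((d:ℝ)-1)) 0 0 0]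
    refine integral_congr_ae (ae_of_all _ fun θ => ?_)
    simp only [hsL]; rw [hs]; field_simp; ring
  have A2 : intH3 K = N + 1 / ((d:ℝ)-1) * M + c^2 * sphArea d := by
    have : ∫ θ, (((d : ℝ) - 1) * (suppS K θ) ^ 2 + suppS K θ * sphLap (suppS K) θ) ∂(sphMeasure d)
        = ((d:ℝ)-1) * N + 1 * M + 0 * Q + (((d:ℝ)-1) * c^2) * sphArea d := by
      rw [← expandc _ _ _ (2*((d:ℝ)-1)*c) c (((d:ℝ)-1)*c) ((d:ℝ)-1) 1]
      refine integral_congr_ae (ae_of_all _ fun θ => ?_)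
      simp only [hsL]; rw [hs]; ring
    rw [intH3, this]; field_simp; ring
  have A3 : delta2SqSteiner K = N := by
    rw [delta2SqSteiner, hN]
    refine integral_congr_ae (ae_of_all _ fun θ => ?_)
    simp only [steinerBallSupp, ← hz, ← hc, lin_eq, hs]; ring
  have A4 : (1 / sphArea d) * (intH2 K) ^ 2 = c^2 * sphArea d := by
    rw [← hcS]; field_simp
  have A5 : 0 ≤ 6 * d * (d+1) * N + (5 * d + 3) * M + 1 * Q := by
    rw [← expand _ _ _ 0 0 0 0 0]
    refine le_of_le_of_eq hgap (integral_congr_ae (ae_of_all _ fun θ => ?_))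
    simp only []; ring
  rw [A1, A2, A3, A4, ge_iff_le, ← sub_nonneg]
  have hn' : 0 < (d:ℝ) - 1 := by linarith
  have hp' : 0 < (d:ℝ) + 1 := by linarith
  have : 0 ≤ (6 * d * (d+1) * N + (5 * d + 3) * M + 1 * Q) / (((d:ℝ)-1) * ((d:ℝ)+1)) := by positivity
  refine le_of_le_of_eq this ?_
  field_simp
  ring

end final

end helpers

/-- reverse inequality to the stability Minkowski inequality. If `K` is
a smooth convex body in `ℝ^d` with boundary `Σ = ∂K` a closed convex hypersurface, then
`((d-1)/(d+1)) [∫_Σ H_{d-2}²/H_{d-1} − (1/|𝕊^{d-1}|)(∫_Σ H_{d-2})²] −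
[(1/|𝕊^{d-1}|)(∫_Σ H_{d-2})² − ∫_Σ H_{d-3}] ≥
(2(d+2)/(d+1)) [(1/|𝕊^{d-1}|)(∫_Σ H_{d-2})² − ∫_Σ H_{d-3} − ((d+1)/(d-1)) δ₂(K,B(K))²]`. -/
theorem minkowski_deficit_lower_bound (d : ℕ) (hd : 2 ≤ d)
    (K : ConvexBody (EuclideanSpace ℝ (Fin d))) (hK : SmoothBody K) :
    (((d : ℝ) - 1) / ((d : ℝ) + 1)) *
        (intH2sq K - (1 / sphArea d) * (intH2 K) ^ 2) -
      ((1 / sphArea d) * (intH2 K) ^ 2 - intH3 K) ≥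
    (2 * ((d : ℝ) + 2) / ((d : ℝ) + 1)) *
      ((1 / sphArea d) * (intH2 K) ^ 2 - intH3 K -
        (((d : ℝ) + 1) / ((d : ℝ) - 1)) * delta2SqSteiner K) := by
  exact main_aux hd K hK
end
end
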